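/- (Main theorem) Assume the P^n are exponentially tight of order n, i.e. inf over compact K ⊆ S of limsup_{n→∞} P^n(S∖K)^{1/n} equals 0. Then there is a deviability density ρ on S such that: (1) ρ satisfies max balance, Φ_ρ(A',A'') = Φ_ρ(A'',A') for every nontrivial partition {A',A''} of A, together with the normalisation ρ(A) = sup_{a∈A} ρ(a) = 1, and these two requirements determine the restriction of ρ to A uniquely among deviability densities on S; (2) ρ(x) = Φ_ρ(A,x) = sup_{a∈A} ρ(a)·Π(a,x) for every x ∈ S; (3) the P^n LD converge at rate n to ρ. -/

import Mathlib

open Filter Topology Metric Set MeasureTheory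
open scoped NNReal

noncomputable section

/-- A deviability density on a topological space `E`. -/
def IsDeviabilityDensity {E : Type*} [TopologicalSpace E] (p : E → ℝ) : Prop :=
  (∀ x, p x ∈ Set.Icc (0:ℝ) 1) ∧ (⨆ x, p x) = 1 ∧
    ∀ γ ∈ Set.Ioc (0:ℝ) 1, IsCompact {x | γ ≤ p x}

variable {S : Type*} [MetricSpace S]

/-- Time shift `θ_s` on continuous paths. -/
def pshift (s : ℝ≥0) (X : C(ℝ≥0, S)) : C(ℝ≥0, S) :=
  ⟨fun t => X (s + t), X.continuous.comp (continuous_const.add continuous_id)⟩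

/-- `Π_{x,t}(y)`. -/
def transDen (Px : S → C(ℝ≥0, S) → ℝ) (x : S) (t : ℝ≥0) (y : S) : ℝ :=
  ⨆ X ∈ {X : C(ℝ≥0, S) | X t = y}, Px x X

/-- The standing assumptions (2.2)--(2.5) of the paper, together with the basic
assumptions on the family of path deviability densities `Px` and the set `A`. -/
structure DevSetup (S : Type*) [MetricSpace S] (Px : S → C(ℝ≥0, S) → ℝ) (A : Set S) :
    Prop where
  dev : ∀ x, IsDeviabilityDensity (Px x)
  start : ∀ x (X : C(ℝ≥0, S)), X 0 ≠ x → Px x X = 0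
  /-- (2.2) upper semicontinuity -/
  usc : UpperSemicontinuous (fun q : S × C(ℝ≥0, S) => Px q.1 q.2)
  /-- (2.2) uniform upper compactness -/
  cpt : ∀ K : Set S, IsCompact K → ∀ γ ∈ Set.Ioc (0:ℝ) 1,
    IsCompact (⋃ x ∈ K, {X : C(ℝ≥0, S) | γ ≤ Px x X})
  /-- (2.3) the maxitive Markov property -/
  markov : ∀ x (X : C(ℝ≥0, S)) (s : ℝ≥0),
    Px x X = (⨆ X' ∈ {X' : C(ℝ≥0, S) | ∀ u ≤ s, X' u = X u}, Px x X') *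
      Px (X s) (pshift s X)
  /-- (2.4) `A` is locally finite -/
  locFin : ∀ K : Set S, IsCompact K → (K ∩ A).Finite
  /-- (2.4)(i) -/
  attract : ∀ x (X : C(ℝ≥0, S)), Px x X = 1 → (⨅ t : ℝ≥0, infDist (X t) A) = 0
  /-- (2.4)(ii) -/
  equil : ∀ a ∈ A, Px a (ContinuousMap.const ℝ≥0 a) = 1
  /-- (2.4)(iii) -/
  connect : ∀ a ∈ A, ∀ a' ∈ A, ∃ t : ℝ≥0, 0 < t ∧ 0 < transDen Px a t a'
  /-- (2.4)(iv) -/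
  nearA : ∀ ε : ℝ, 0 < ε → ∃ δ : ℝ, 0 < δ ∧ ∀ x : S, infDist x A < δ →
    ∃ s₀ s₁ : ℝ≥0, 0 < s₀ ∧ 0 < s₁ ∧ ∃ a ∈ A,
      1 - ε < transDen Px x s₀ a ∧ 1 - ε < transDen Px a s₁ x
  /-- (2.4)(v) -/
  localMove : ∀ x : S, ∀ ε : ℝ, 0 < ε → ∃ δ : ℝ, 0 < δ ∧ ∃ t₀ t₁ : ℝ≥0,
    ∀ x' : S, dist x x' < δ →
      1 - ε < transDen Px x t₀ x' ∧ 1 - ε < transDen Px x' t₁ x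
  /-- (2.5) uniform tightness -/
  tight : ∀ K₁ : Set S, IsCompact K₁ → ∀ ε : ℝ, 0 < ε → ∃ K₂ : Set S, IsCompact K₂ ∧
    Filter.limsup (fun t : ℝ≥0 => ⨆ x ∈ K₁, ⨆ y ∈ K₂ᶜ, transDen Px x t y) atTop < ε

/-- LD convergence at the given rate of a sequence of Borel probability measures to a
deviability density. -/
def LDConv {E : Type*} [TopologicalSpace E] [MeasurableSpace E]
    (Q : ℕ → Measure E) (rate : ℕ → ℕ) (p : E → ℝ) : Prop :=
  ∀ f : E → ℝ, Continuous f → (∀ x, 0 ≤ f x) → BddAbove (Set.range f) →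
    Tendsto (fun n => (∫ x, (f x) ^ (rate n) ∂(Q n)) ^ ((rate n : ℝ)⁻¹)) atTop
      (𝓝 (⨆ x, f x * p x))


/-- The max flux `Φ_ρ(Γ,Γ')` relative to the limiting transition density `PL`. -/
def maxFlux (PL : S → S → ℝ) (ρ : S → ℝ) (Γ Γ' : Set S) : ℝ :=
  ⨆ x ∈ Γ, ρ x * ⨆ y ∈ Γ', PL x y

/-- `Φ_ρ(Γ, x)`, the max flux into a point. -/
def maxFluxPt (PL : S → S → ℝ) (ρ : S → ℝ) (Γ : Set S) (x : S) : ℝ :=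
  ⨆ a ∈ Γ, ρ a * PL a x

lemma bsup_le {α : Type*} {s : Set α} {f : α → ℝ} {c : ℝ} (hc : 0 ≤ c)
    (h : ∀ x ∈ s, f x ≤ c) : (⨆ x ∈ s, f x) ≤ c :=
  Real.iSup_le (fun x => Real.iSup_le (h x) hc) hc

lemma le_bsup {α : Type*} {s : Set α} {f : α → ℝ} {M : ℝ} (hM : 0 ≤ M)
    (h : ∀ x ∈ s, f x ≤ M) {x : α} (hx : x ∈ s) : f x ≤ ⨆ x ∈ s, f x := by
  have h1 : f x = ⨆ (_ : x ∈ s), f x := by simp [hx]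
  rw [h1]
  exact le_ciSup (f := fun x => ⨆ (_ : x ∈ s), f x)
    ⟨M, by rintro _ ⟨y, rfl⟩; exact Real.iSup_le (h y) hM⟩ x

lemma bsup_nonneg {α : Type*} {s : Set α} {f : α → ℝ} (h : ∀ x ∈ s, 0 ≤ f x) :
    0 ≤ ⨆ x ∈ s, f x :=
  Real.iSup_nonneg (fun x => Real.iSup_nonneg (h x))

lemma lt_bsup {α : Type*} {s : Set α} {f : α → ℝ} {c : ℝ} (hc : 0 ≤ c)
    (h : c < ⨆ x ∈ s, f x) : ∃ x ∈ s, c < f x := by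
  by_contra hcon
  push Not at hcon
  exact absurd (bsup_le hc hcon) (not_le.2 h)

lemma bsup_mul_le {α : Type*} {s : Set α} {f : α → ℝ} {B C : ℝ} (hB : 0 ≤ B) (hC : 0 ≤ C)
    (h : ∀ x ∈ s, f x * B ≤ C) : (⨆ x ∈ s, f x) * B ≤ C := by
  rcases hB.eq_or_lt with h0 | h0
  · simpa [← h0] using hC
  · rw [← le_div_iff₀ h0]
    exact bsup_le (div_nonneg hC hB) (fun x hx => (le_div_iff₀ h0).2 (h x hx))

/-- choose a small `ε`. -/
lemma exists_eps {a b : ℝ} (h : a < b) : ∃ ε : ℝ, 0 < ε ∧ ε < 1 ∧ a < (1 - ε) ^ 4 * b ∧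
    a < (1 - ε) ^ 2 * b ∧ a < (1 - ε) * b := by
  have key : ∀ k : ℕ, ∀ᶠ ε : ℝ in 𝓝[>] 0, a < (1 - ε) ^ k * b := by
    intro k
    have : Tendsto (fun ε : ℝ => (1 - ε) ^ k * b) (𝓝[>] 0) (𝓝 ((1 - 0) ^ k * b)) :=
      ((by fun_prop : Continuous fun ε : ℝ => (1 - ε) ^ k * b).tendsto 0).mono_left
        nhdsWithin_le_nhds
    exact this.eventually (lt_mem_nhds (by simpa using h))
  have h1 : ∀ᶠ ε : ℝ in 𝓝[>] 0, ε < 1 := nhdsWithin_le_nhds (gt_mem_nhds one_pos)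
  obtain ⟨ε, h3, h2, h4, h1, h0⟩ := ((key 4).and ((key 2).and ((key 1).and
    (h1.and self_mem_nhdsWithin)))).exists
  exact ⟨ε, h0, h1, h3, h2, by simpa using h4⟩

section setup

variable {Px : S → C(ℝ≥0, S) → ℝ} {A : Set S}

lemma DevSetup.nonneg (hyp : DevSetup S Px A) (x X) : 0 ≤ Px x X := ((hyp.dev x).1 X).1
lemma DevSetup.le_one (hyp : DevSetup S Px A) (x X) : Px x X ≤ 1 := ((hyp.dev x).1 X).2

lemma DevSetup.T_nonneg (hyp : DevSetup S Px A) (x t y) : 0 ≤ transDen Px x t y :=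
  bsup_nonneg (fun X _ => hyp.nonneg x X)

lemma DevSetup.T_le_one (hyp : DevSetup S Px A) (x t y) : transDen Px x t y ≤ 1 :=
  bsup_le zero_le_one (fun X _ => hyp.le_one x X)

lemma DevSetup.le_T (hyp : DevSetup S Px A) (x t) (X : C(ℝ≥0, S)) :
    Px x X ≤ transDen Px x t (X t) :=
  le_bsup (s := {Y : C(ℝ≥0, S) | Y t = X t}) zero_le_one (fun X _ => hyp.le_one x X) rfl

lemma DevSetup.lt_T {x t y} {c : ℝ} (hc : 0 ≤ c) (h : c < transDen Px x t y) :
    ∃ X : C(ℝ≥0, S), X t = y ∧ c < Px x X := lt_bsup hc h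

lemma DevSetup.markov_le (hyp : DevSetup S Px A) (x) (s t) (X : C(ℝ≥0, S)) :
    Px x X ≤ transDen Px x s (X s) * transDen Px (X s) t (X (s + t)) := by
  rw [hyp.markov x X s]
  refine mul_le_mul ?_ ?_ (hyp.nonneg _ _) (hyp.T_nonneg _ _ _)
  · refine bsup_le (hyp.T_nonneg _ _ _) (fun X' h => ?_)
    have := hyp.le_T x s X'
    rwa [h s le_rfl] at this
  · exact hyp.le_T (X s) t (pshift s X)

/-- concatenation of paths -/
def pconcat (s : ℝ≥0) (X Y : C(ℝ≥0, S)) (h : X s = Y 0) : C(ℝ≥0, S) :=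
  ⟨fun u => if u ≤ s then X u else Y (u - s), by
    refine Continuous.if_le X.continuous
      (Y.continuous.comp (continuous_id.sub continuous_const)) continuous_id continuous_const ?_
    rintro u rfl
    simpa using h⟩

lemma DevSetup.T_comp (hyp : DevSetup S Px A) (x y z) (s t) :
    transDen Px x s y * transDen Px y t z ≤ transDen Px x (s + t) z := by
  have h0 := hyp.T_nonneg x (s + t) z
  refine bsup_mul_le (hyp.T_nonneg _ _ _) h0 (fun X hX => ?_)
  rw [mul_comm]
  refine bsup_mul_le (hyp.nonneg _ _) h0 (fun Y hY => ?_)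
  simp only [mem_ofPred_eq] at hX hY
  by_cases hY0 : Y 0 = y
  swap
  · rw [hyp.start y Y hY0]; simpa using h0
  have hXY : X s = Y 0 := hX.trans hY0.symm
  set Z := pconcat s X Y hXY with hZ
  have hZs : Z s = y := by simp [hZ, pconcat, hX]
  have hsh : pshift s Z = Y := by
    ext u
    simp only [hZ, pconcat, pshift, ContinuousMap.coe_mk]
    split_ifs with h
    · have : u = 0 := by simpa using h
      subst this; simpa using hXY
    · simp
  have hZt : Z (s + t) = z := by
    rw [← hY, ← hsh]; rfl
  have h1 := hyp.le_T x (s + t) Z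
  rw [hZt, hyp.markov x Z s, hsh, hZs] at h1
  rw [mul_comm]
  refine le_trans (mul_le_mul_of_nonneg_right ?_ (hyp.nonneg _ _)) h1
  refine le_bsup (s := {X' : C(ℝ≥0, S) | ∀ u ≤ s, X' u = Z u}) zero_le_one
    (fun X _ => hyp.le_one x X) ?_
  intro u hu
  simp [hZ, pconcat, hu]

lemma DevSetup.T_self (hyp : DevSetup S Px A) {a} (ha : a ∈ A) (t) :
    transDen Px a t a = 1 := by
  refine le_antisymm (hyp.T_le_one _ _ _) ?_
  have := hyp.le_T a t (ContinuousMap.const ℝ≥0 a)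
  rwa [hyp.equil a ha] at this

variable {PL : S → S → ℝ}

lemma DevSetup.PL_nonneg (hyp : DevSetup S Px A)
    (hPL : ∀ x y : S, Tendsto (fun t : ℝ≥0 => transDen Px x t y) atTop (𝓝 (PL x y))) (x y) :
    0 ≤ PL x y := ge_of_tendsto' (hPL x y) (fun t => hyp.T_nonneg x t y)

lemma DevSetup.PL_le_one (hyp : DevSetup S Px A)
    (hPL : ∀ x y : S, Tendsto (fun t : ℝ≥0 => transDen Px x t y) atTop (𝓝 (PL x y))) (x y) :
    PL x y ≤ 1 := le_of_tendsto' (hPL x y) (fun t => hyp.T_le_one x t y)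

lemma DevSetup.PL_left (hyp : DevSetup S Px A)
    (hPL : ∀ x y : S, Tendsto (fun t : ℝ≥0 => transDen Px x t y) atTop (𝓝 (PL x y)))
    (x z y s) : transDen Px x s z * PL z y ≤ PL x y := by
  have h1 : Tendsto (fun t : ℝ≥0 => transDen Px x (s + t) y) atTop (𝓝 (PL x y)) :=
    (hPL x y).comp (tendsto_atTop_mono (fun t => le_add_self) tendsto_id)
  exact le_of_tendsto_of_tendsto' ((hPL z y).const_mul _) h1 (fun t => hyp.T_comp _ _ _ _ _)

lemma DevSetup.PL_right (hyp : DevSetup S Px A)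
    (hPL : ∀ x y : S, Tendsto (fun t : ℝ≥0 => transDen Px x t y) atTop (𝓝 (PL x y)))
    (x z y s) : PL x z * transDen Px z s y ≤ PL x y := by
  have h1 : Tendsto (fun t : ℝ≥0 => transDen Px x (t + s) y) atTop (𝓝 (PL x y)) :=
    (hPL x y).comp (tendsto_atTop_mono (fun t => le_self_add) tendsto_id)
  exact le_of_tendsto_of_tendsto' ((hPL x z).mul_const _) h1 (fun t => hyp.T_comp _ _ _ _ _)

lemma DevSetup.PL_comp (hyp : DevSetup S Px A)
    (hPL : ∀ x y : S, Tendsto (fun t : ℝ≥0 => transDen Px x t y) atTop (𝓝 (PL x y)))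
    (x z y) : PL x z * PL z y ≤ PL x y :=
  le_of_tendsto' ((hPL z y).const_mul _) (fun s => hyp.PL_right hPL x z y s)

lemma DevSetup.PL_self (hyp : DevSetup S Px A)
    (hPL : ∀ x y : S, Tendsto (fun t : ℝ≥0 => transDen Px x t y) atTop (𝓝 (PL x y)))
    {a} (ha : a ∈ A) : PL a a = 1 := by
  refine tendsto_nhds_unique (hPL a a) ?_
  simp only [hyp.T_self ha]
  exact tendsto_const_nhds

lemma DevSetup.T_le_PL_to (hyp : DevSetup S Px A)
    (hPL : ∀ x y : S, Tendsto (fun t : ℝ≥0 => transDen Px x t y) atTop (𝓝 (PL x y)))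
    {a} (ha : a ∈ A) (x t) : transDen Px x t a ≤ PL x a := by
  have := hyp.PL_left hPL x a a t
  rwa [hyp.PL_self hPL ha, mul_one] at this

lemma DevSetup.T_le_PL_from (hyp : DevSetup S Px A)
    (hPL : ∀ x y : S, Tendsto (fun t : ℝ≥0 => transDen Px x t y) atTop (𝓝 (PL x y)))
    {a} (ha : a ∈ A) (x t) : transDen Px a t x ≤ PL a x := by
  have := hyp.PL_right hPL a a x t
  rwa [hyp.PL_self hPL ha, one_mul] at this

lemma DevSetup.PL_pos (hyp : DevSetup S Px A)
    (hPL : ∀ x y : S, Tendsto (fun t : ℝ≥0 => transDen Px x t y) atTop (𝓝 (PL x y)))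
    {a b} (ha : a ∈ A) (hb : b ∈ A) : 0 < PL a b := by
  obtain ⟨t, -, h⟩ := hyp.connect a ha b hb
  exact h.trans_le (hyp.T_le_PL_to hPL hb a t)

/-- Claim A: cheap paths come close to `A` within bounded time. -/
lemma DevSetup.claimA (hyp : DevSetup S Px A) {K : Set S} (hK : IsCompact K) {δ : ℝ}
    (hδ : 0 < δ) : ∃ L : ℝ≥0, ∃ η : ℝ, 0 < η ∧ η < 1 ∧ ∀ X : C(ℝ≥0, S), X 0 ∈ K →
      1 - η < Px (X 0) X → ∃ t ≤ L, infDist (X t) A < δ := by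
  by_contra hcon
  push Not at hcon
  have hη : ∀ k : ℕ, 0 < 1 / ((k : ℝ) + 2) ∧ 1 / ((k : ℝ) + 2) ≤ 1 / 2 := by
    intro k
    refine ⟨by positivity, ?_⟩
    have : (0:ℝ) ≤ k := by positivity
    exact one_div_le_one_div_of_le (by norm_num) (by linarith)
  choose X hX0 hX1 hX2 using fun k : ℕ => hcon k (1 / ((k : ℝ) + 2)) (hη k).1
    ((hη k).2.trans_lt (by norm_num))
  have hC := hyp.cpt K hK (1 / 2) ⟨by norm_num, by norm_num⟩
  obtain ⟨Y, -, hY⟩ := hC.ultrafilter_le_nhds ((hyperfilter ℕ).map X) (by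
    refine le_principal_iff.2 (Filter.mem_map.2 (Filter.univ_mem' fun k => ?_))
    simp only [mem_preimage, mem_iUnion, mem_ofPred_eq]
    refine ⟨X k 0, hX0 k, ?_⟩
    have := hX1 k
    have := (hη k).2
    linarith)
  have hY : Tendsto X (hyperfilter ℕ : Filter ℕ) (𝓝 Y) := hY
  have hle : (hyperfilter ℕ : Filter ℕ) ≤ atTop := Nat.hyperfilter_le_atTop
  have hev : ∀ t : ℝ≥0, Tendsto (fun k => X k t) (hyperfilter ℕ : Filter ℕ) (𝓝 (Y t)) :=
    fun t => ((continuous_eval_const (F := C(ℝ≥0, S)) t).tendsto Y).comp hY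
  have h1 : Px (Y 0) Y = 1 := by
    refine le_antisymm (hyp.le_one _ _) (le_of_not_gt fun hlt => ?_)
    obtain ⟨c, hc1, hc2⟩ := exists_between hlt
    have e1 := ((hev 0).prodMk_nhds hY).eventually (hyp.usc (Y 0, Y) c hc1)
    have e2 : ∀ᶠ k : ℕ in atTop, 1 / ((k : ℝ) + 2) < 1 - c := by
      have : Tendsto (fun k : ℕ => 1 / ((k : ℝ) + 2)) atTop (𝓝 0) := by
        have := (tendsto_one_div_add_atTop_nhds_zero_nat (𝕜 := ℝ)).comp (tendsto_add_atTop_nat 1)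
        refine this.congr (fun k => ?_)
        simp only [Function.comp]; push_cast; ring_nf
      exact this.eventually (gt_mem_nhds (by linarith))
    obtain ⟨k, hk1, hk2⟩ := (e1.and (hle e2)).exists
    have := hX1 k
    simp only at hk1
    linarith
  have h2 : ∀ t, δ ≤ infDist (Y t) A := by
    intro t
    refine ge_of_tendsto (((continuous_infDist_pt A).tendsto (Y t)).comp (hev t)) ?_
    obtain ⟨N, hN⟩ := exists_nat_ge t
    refine hle ((eventually_ge_atTop N).mono fun k hk => hX2 k t (hN.trans (by exact_mod_cast hk)))
  have h3 := hyp.attract _ _ h1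
  have h4 : δ ≤ ⨅ t, infDist (Y t) A := le_ciInf h2
  linarith

/-- a long path of positive weight has a cheap window -/
lemma DevSetup.window (hyp : DevSetup S Px A) (L : ℝ≥0) {q : ℝ} (hq : 0 < q) (N : ℕ) :
    ∀ (x : S) (X : C(ℝ≥0, S)), q ^ N < Px x X → N = 0 ∨ ∃ k < N,
      q < ⨆ X' ∈ {X' : C(ℝ≥0, S) | ∀ u ≤ L, X' u = X (k * L + u)}, Px (X (k * L)) X' := by
  induction N with
  | zero => intro x X _; exact Or.inl rfl
  | succ N ih =>
    intro x X h
    right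
    have hx : X 0 = x := by
      by_contra hne
      rw [hyp.start x X hne] at h
      exact absurd h (not_lt.2 (by positivity))
    rw [hyp.markov x X L] at h
    by_cases hc : q < ⨆ X' ∈ {X' : C(ℝ≥0, S) | ∀ u ≤ L, X' u = X u}, Px x X'
    · refine ⟨0, Nat.succ_pos _, ?_⟩
      simpa [hx] using hc
    · push Not at hc
      have h1 : q ^ N < Px (X L) (pshift L X) := by
        by_contra hcon
        push Not at hcon
        have := mul_le_mul hc hcon (hyp.nonneg _ _) hq.le
        rw [pow_succ'] at h
        linarith
      rcases ih _ _ h1 with h0 | ⟨k, hk, h2⟩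
      · exfalso
        subst h0
        have := hyp.le_one (X L) (pshift L X)
        simp at h1
        linarith
      · refine ⟨k + 1, by omega, ?_⟩
        have e1 : ∀ u : ℝ≥0, (pshift L X) (k * L + u) = X ((k + 1 : ℕ) * L + u) := by
          intro u
          simp only [pshift, ContinuousMap.coe_mk]
          congr 1; push_cast; ring
        have e2 : (pshift L X) (k * L) = X ((k + 1 : ℕ) * L) := by
          have := e1 0
          simpa using this
        simp only [e1, e2] at h2
        exact h2

lemma DevSetup.toA (hyp : DevSetup S Px A)
    (hPL : ∀ x y : S, Tendsto (fun t : ℝ≥0 => transDen Px x t y) atTop (𝓝 (PL x y)))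
    (x : S) {ε : ℝ} (hε : 0 < ε) (hε1 : ε < 1) : ∃ a ∈ A, (1 - ε) ^ 2 ≤ PL x a := by
  obtain ⟨δ, hδ, hA⟩ := hyp.nearA ε hε
  obtain ⟨L, η, hη, hη1, hL⟩ := hyp.claimA (isCompact_singleton (x := x)) hδ
  have hm : max (1 - η) (1 - ε) < ⨆ X, Px x X := by
    rw [(hyp.dev x).2.1]; exact max_lt (by linarith) (by linarith)
  have : Nonempty C(ℝ≥0, S) := ⟨ContinuousMap.const _ x⟩
  obtain ⟨X, hX⟩ := exists_lt_of_lt_ciSup hm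
  obtain ⟨hX1, hX2⟩ := max_lt_iff.1 hX
  have hx : X 0 = x := by
    by_contra hne
    rw [hyp.start x X hne] at hX2
    linarith
  obtain ⟨t, -, ht⟩ := hL X (by simp [hx]) (by rwa [hx])
  obtain ⟨s₀, s₁, -, -, a, ha, h0, h1⟩ := hA _ ht
  refine ⟨a, ha, ?_⟩
  calc (1 - ε) ^ 2 = (1 - ε) * (1 - ε) := by ring
    _ ≤ transDen Px x t (X t) * transDen Px (X t) s₀ a :=
      mul_le_mul (hX2.le.trans (hyp.le_T x t X)) h0.le (by linarith) (hyp.T_nonneg _ _ _)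
    _ ≤ _ := (hyp.T_comp _ _ _ _ _).trans (hyp.T_le_PL_to hPL ha _ _)

/-- Lemma N: long transitions pass near `A`. -/
lemma DevSetup.through (hyp : DevSetup S Px A)
    (hPL : ∀ x y : S, Tendsto (fun t : ℝ≥0 => transDen Px x t y) atTop (𝓝 (PL x y)))
    {ρ : S → ℝ} (hρ0 : ∀ x, 0 ≤ ρ x) (hρ1 : ∀ x, ρ x ≤ 1)
    (hρc : ∀ γ ∈ Set.Ioc (0:ℝ) 1, IsCompact {x | γ ≤ ρ x})
    (hinv : ∀ x t y, ρ x * transDen Px x t y ≤ ρ y)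
    {γ ε : ℝ} (hγ : 0 < γ) (hε : 0 < ε) :
    ∃ t₀ : ℝ≥0, ∀ t ≥ t₀, ∀ x y, γ < ρ x * transDen Px x t y → ∃ a ∈ A, ∃ u v : ℝ,
      0 ≤ u ∧ u ≤ 1 ∧ 0 ≤ v ∧ v ≤ 1 ∧ γ < ρ x * (u * v) ∧
      (1 - ε) * u ≤ PL x a ∧ (1 - ε) * v ≤ PL a y := by
  rcases le_or_gt γ 1 with hγ1 | hγ1
  swap
  · refine ⟨0, fun t _ x y h => ?_⟩
    have := mul_le_mul (hρ1 x) (hyp.T_le_one x t y) (hyp.T_nonneg _ _ _) zero_le_one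
    linarith
  obtain ⟨δ, hδ, hA⟩ := hyp.nearA ε hε
  obtain ⟨L, η, hη, hη1, hL⟩ := hyp.claimA (hρc γ ⟨hγ, hγ1⟩) hδ
  obtain ⟨N, hN⟩ := exists_pow_lt_of_lt_one hγ (by linarith : 1 - η < 1)
  have hN0 : N ≠ 0 := by
    rintro rfl
    simp at hN; linarith
  refine ⟨N * L, fun t ht x y h => ?_⟩
  have hρx : 0 < ρ x := by
    rcases (hρ0 x).eq_or_lt with h0 | h0
    · rw [← h0] at h; simp at h; linarith
    · exact h0
  obtain ⟨X, hXt, hX⟩ := DevSetup.lt_T (by positivity) ((div_lt_iff₀' hρx).2 h)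
  rw [div_lt_iff₀' hρx] at hX
  have hXγ : γ < Px x X := by
    have := mul_le_mul_of_nonneg_right (hρ1 x) (hyp.nonneg x X)
    linarith
  rcases hyp.window L (by linarith : 0 < 1 - η) N x X (hN.trans hXγ) with h0 | ⟨k, hk, hw⟩
  · exact absurd h0 hN0
  obtain ⟨X', hX'1, hX'2⟩ := lt_bsup (by linarith) hw
  have h00 : X' 0 = X (k * L) := by simpa using hX'1 0 (by simp)
  have hmem : X' 0 ∈ {x | γ ≤ ρ x} := by
    rw [h00]
    have h1 := hinv x (k * L) (X (k * L))
    have h2 := mul_le_mul_of_nonneg_left (hyp.le_T x (k * L) X) (hρ0 x)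
    simp only [mem_ofPred_eq]
    linarith
  obtain ⟨r, hr, hz⟩ := hL X' hmem (by rwa [h00])
  rw [hX'1 r hr] at hz
  obtain ⟨s₀, s₁, -, -, a, ha, h0, h1⟩ := hA _ hz
  set s : ℝ≥0 := k * L + r with hs
  have hst : s ≤ t := by
    refine le_trans ?_ ht
    calc s ≤ k * L + L := add_le_add le_rfl hr
      _ = ((k + 1 : ℕ) : ℝ≥0) * L := by push_cast; ring
      _ ≤ N * L := by gcongr; exact_mod_cast hk
  have hm := hyp.markov_le x s (t - s) X
  rw [add_tsub_cancel_of_le hst, hXt] at hm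
  refine ⟨a, ha, transDen Px x s (X s), transDen Px (X s) (t - s) y, hyp.T_nonneg _ _ _,
    hyp.T_le_one _ _ _, hyp.T_nonneg _ _ _, hyp.T_le_one _ _ _, ?_, ?_, ?_⟩
  · exact hX.trans_le (mul_le_mul_of_nonneg_left hm (hρ0 x))
  · rw [mul_comm]
    exact (mul_le_mul_of_nonneg_left h0.le (hyp.T_nonneg _ _ _)).trans
      ((hyp.T_comp _ _ _ _ _).trans (hyp.T_le_PL_to hPL ha _ _))
  · exact (mul_le_mul_of_nonneg_right h1.le (hyp.T_nonneg _ _ _)).trans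
      ((hyp.T_comp _ _ _ _ _).trans (hyp.T_le_PL_from hPL ha _ _))

end setup

section ld

/-- The local LD rate of `P` along the ultrafilter `U`. -/
def rhoU [MeasurableSpace S] (U : Ultrafilter ℕ) (P : ℕ → Measure S) (x : S) : ℝ :=
  sInf {c : ℝ | 0 ≤ c ∧ ∃ V ∈ 𝓝 x, ∀ᶠ n in (U : Filter ℕ), P n V ≤ ENNReal.ofReal (c ^ n)}

section rho

variable [MeasurableSpace S] {U : Ultrafilter ℕ} {P : ℕ → Measure S}

lemma rhoU_nonneg (x : S) : 0 ≤ rhoU U P x := Real.sInf_nonneg fun _ h => h.1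

lemma rhoU_le {x : S} {c : ℝ} (hc : 0 ≤ c) {V : Set S} (hV : V ∈ 𝓝 x)
    (h : ∀ᶠ n in (U : Filter ℕ), P n V ≤ ENNReal.ofReal (c ^ n)) : rhoU U P x ≤ c :=
  csInf_le ⟨0, fun _ h => h.1⟩ ⟨hc, V, hV, h⟩

lemma rhoU_le_one (hP : ∀ n, IsProbabilityMeasure (P n)) (x : S) : rhoU U P x ≤ 1 :=
  rhoU_le zero_le_one univ_mem (Eventually.of_forall fun n => by simp)

lemma rhoU_up (hP : ∀ n, IsProbabilityMeasure (P n)) {x : S} {c : ℝ} (h : rhoU U P x < c) :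
    ∃ V, IsOpen V ∧ x ∈ V ∧ ∀ᶠ n in (U : Filter ℕ), P n V ≤ ENNReal.ofReal (c ^ n) := by
  have hne : {c : ℝ | 0 ≤ c ∧ ∃ V ∈ 𝓝 x, ∀ᶠ n in (U : Filter ℕ),
      P n V ≤ ENNReal.ofReal (c ^ n)}.Nonempty :=
    ⟨1, zero_le_one, univ, univ_mem, Eventually.of_forall fun n => by simp⟩
  obtain ⟨d, ⟨hd0, W, hW, hd⟩, hdc⟩ := exists_lt_of_csInf_lt hne h
  obtain ⟨V, hVW, hV, hxV⟩ := _root_.mem_nhds_iff.1 hW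
  refine ⟨V, hV, hxV, hd.mono fun n hn => ?_⟩
  refine (measure_mono hVW).trans (hn.trans (ENNReal.ofReal_le_ofReal ?_))
  gcongr

lemma rhoU_low {x : S} {c : ℝ} (hc : 0 ≤ c) (h : c < rhoU U P x) {V : Set S} (hV : V ∈ 𝓝 x) :
    ∀ᶠ n in (U : Filter ℕ), ENNReal.ofReal (c ^ n) ≤ P n V := by
  have : ¬ ∀ᶠ n in (U : Filter ℕ), P n V ≤ ENNReal.ofReal (c ^ n) :=
    fun hh => absurd (rhoU_le hc hV hh) (not_le.2 h)
  rw [← Ultrafilter.eventually_not] at this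
  exact this.mono fun n hn => (not_le.1 hn).le

lemma ldUB [BorelSpace S] (hU : (U : Filter ℕ) ≤ atTop) (hP : ∀ n, IsProbabilityMeasure (P n))
    (hT : ∀ η : ℝ, 0 < η → ∃ Kc : Set S, IsCompact Kc ∧
      ∀ᶠ n in (U : Filter ℕ), P n Kcᶜ ≤ ENNReal.ofReal (η ^ n))
    (g : ℕ → S → ENNReal) (h : S → ℝ) (h0 : ∀ x, 0 ≤ h x) {M : ℝ} (hM : 0 < M)
    (hgM : ∀ᶠ n in (U : Filter ℕ), ∀ x, g n x ≤ ENNReal.ofReal (M ^ n))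
    (hloc : ∀ x, ∀ ε : ℝ, 0 < ε → ∃ V ∈ 𝓝 x, ∀ᶠ n in (U : Filter ℕ), ∀ x' ∈ V,
      g n x' ≤ ENNReal.ofReal ((h x + ε) ^ n))
    {c : ℝ} (hc : 0 ≤ c) (hρ : ∀ x, rhoU U P x * h x ≤ c) {ε : ℝ} (hε : 0 < ε) :
    ∀ᶠ n in (U : Filter ℕ), ∫⁻ x, g n x ∂(P n) ≤ ENNReal.ofReal ((c + ε) ^ n) := by
  set b := c + ε / 2 with hb
  have hb0 : 0 < b := by positivity
  obtain ⟨Kc, hKc, hKP⟩ := hT (b / M) (by positivity)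
  have bound : ∀ (V : Set S), MeasurableSet V → ∀ p q : ℝ, 0 ≤ p → 0 ≤ q → p * q ≤ b → ∀ n,
      (∀ x ∈ V, g n x ≤ ENNReal.ofReal (p ^ n)) → P n V ≤ ENNReal.ofReal (q ^ n) →
      ∫⁻ x in V, g n x ∂(P n) ≤ ENNReal.ofReal (b ^ n) := by
    intro V hV p q hp hq hpq n hg hPV
    calc ∫⁻ x in V, g n x ∂(P n) ≤ ∫⁻ x in V, ENNReal.ofReal (p ^ n) ∂(P n) :=
          setLIntegral_mono' hV hg
      _ = ENNReal.ofReal (p ^ n) * P n V := by simp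
      _ ≤ ENNReal.ofReal (p ^ n) * ENNReal.ofReal (q ^ n) := by gcongr
      _ = ENNReal.ofReal ((p * q) ^ n) := by
          rw [← ENNReal.ofReal_mul (by positivity), mul_pow]
      _ ≤ _ := by
          apply ENNReal.ofReal_le_ofReal
          gcongr
  have hK : ∃ k : ℕ, ∀ᶠ n in (U : Filter ℕ),
      ∫⁻ x in Kc, g n x ∂(P n) ≤ k * ENNReal.ofReal (b ^ n) := by
    refine hKc.induction_on (p := fun s => ∃ k : ℕ, ∀ᶠ n in (U : Filter ℕ),
      ∫⁻ x in s, g n x ∂(P n) ≤ k * ENNReal.ofReal (b ^ n)) ⟨0, by simp⟩ ?_ ?_ ?_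
    · rintro s t hst ⟨k, hk⟩
      exact ⟨k, hk.mono fun n hn => (lintegral_mono_set hst).trans hn⟩
    · rintro s t ⟨k, hk⟩ ⟨l, hl⟩
      refine ⟨k + l, (hk.and hl).mono fun n hn => ?_⟩
      refine (lintegral_union_le _ _ _).trans ((add_le_add hn.1 hn.2).trans ?_)
      push_cast
      rw [add_mul]
    · intro x hx
      have : ∃ η : ℝ, 0 < η ∧ (h x + η) * (rhoU U P x + η) < b := by
        have ht : Tendsto (fun η : ℝ => (h x + η) * (rhoU U P x + η)) (𝓝[>] 0)
            (𝓝 ((h x + 0) * (rhoU U P x + 0))) :=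
          ((by fun_prop : Continuous fun η : ℝ => (h x + η) * (rhoU U P x + η)).tendsto 0).mono_left
            nhdsWithin_le_nhds
        have hlt : (h x + 0) * (rhoU U P x + 0) < b := by
          have := hρ x
          rw [add_zero, add_zero, mul_comm]; linarith
        obtain ⟨η, h1, h2⟩ := ((ht.eventually (gt_mem_nhds hlt)).and self_mem_nhdsWithin).exists
        exact ⟨η, h2, h1⟩
      obtain ⟨η, hη, hlt⟩ := this
      obtain ⟨V, hV, hxV, hPV⟩ := rhoU_up hP (by linarith : rhoU U P x < rhoU U P x + η)
      obtain ⟨W, hW, hgW⟩ := hloc x η hη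
      obtain ⟨W', hW'W, hW', hxW'⟩ := _root_.mem_nhds_iff.1 hW
      refine ⟨V ∩ W', mem_nhdsWithin_of_mem_nhds ((hV.inter hW').mem_nhds ⟨hxV, hxW'⟩), 1, ?_⟩
      filter_upwards [hPV, hgW] with n h1 h2
      rw [Nat.cast_one, one_mul]
      have := h0 x
      have := rhoU_nonneg (U := U) (P := P) x
      exact bound _ (hV.inter hW').measurableSet _ _ (by linarith) (by linarith) hlt.le n
        (fun y hy => h2 y (hW'W hy.2)) ((measure_mono inter_subset_left).trans h1)
  obtain ⟨k, hk⟩ := hK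
  have hbig : ∀ᶠ n : ℕ in atTop, ((k : ℝ) + 1) * b ^ n ≤ (c + ε) ^ n := by
    have h1 : 1 < (c + ε) / b := by rw [one_lt_div hb0]; linarith
    filter_upwards [(tendsto_pow_atTop_atTop_of_one_lt h1).eventually_ge_atTop ((k : ℝ) + 1)]
      with n hn
    rwa [div_pow, le_div_iff₀ (by positivity)] at hn
  filter_upwards [hk, hKP, hgM, hU hbig] with n h1 h2 h3 h4
  rw [← lintegral_add_compl _ hKc.isClosed.measurableSet]
  have h5 := bound Kcᶜ hKc.isClosed.measurableSet.compl M (b / M) hM.le (by positivity)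
    (by field_simp; rfl) n (fun x _ => h3 x) h2
  calc _ ≤ k * ENNReal.ofReal (b ^ n) + ENNReal.ofReal (b ^ n) := add_le_add h1 h5
    _ = ENNReal.ofReal (((k : ℝ) + 1) * b ^ n) := by
      rw [ENNReal.ofReal_mul (by positivity), ENNReal.ofReal_add (by positivity) zero_le_one]
      simp [add_mul]
    _ ≤ _ := ENNReal.ofReal_le_ofReal h4

lemma exists_between_mul {p q c : ℝ} (hp : 0 ≤ p) (hq : 0 ≤ q) (hc : 0 ≤ c) (h : c < p * q) :
    ∃ p' q', 0 ≤ p' ∧ p' < p ∧ 0 ≤ q' ∧ q' < q ∧ c ≤ p' * q' := by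
  have hp0 : 0 < p := by
    rcases hp.eq_or_lt with h0 | h0
    · rw [← h0] at h; simp at h; linarith
    · exact h0
  have hq0 : 0 < q := by
    rcases hq.eq_or_lt with h0 | h0
    · rw [← h0] at h; simp at h; linarith
    · exact h0
  obtain ⟨ε, e0, e1, -, h2, -⟩ := exists_eps h
  exact ⟨(1 - ε) * p, (1 - ε) * q, mul_nonneg (by linarith) hp, by nlinarith,
    mul_nonneg (by linarith) hq, by nlinarith, by nlinarith⟩

lemma ldLB [BorelSpace S] (g : ℕ → S → ENNReal) (x : S) {h : ℝ} (h0 : 0 ≤ h)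
    (hloc : ∀ b : ℝ, 0 ≤ b → b < h → ∃ V ∈ 𝓝 x, ∀ᶠ n in (U : Filter ℕ), ∀ x' ∈ V,
      ENNReal.ofReal (b ^ n) ≤ g n x')
    {c : ℝ} (hc : 0 ≤ c) (hρ : c < rhoU U P x * h) :
    ∀ᶠ n in (U : Filter ℕ), ENNReal.ofReal (c ^ n) ≤ ∫⁻ x, g n x ∂(P n) := by
  obtain ⟨r, b, hr0, hr, hb0, hb, hrb⟩ := exists_between_mul (rhoU_nonneg x) h0 hc hρ
  obtain ⟨W, hW, hgW⟩ := hloc b hb0 hb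
  obtain ⟨V, hVW, hV, hxV⟩ := _root_.mem_nhds_iff.1 hW
  filter_upwards [hgW, rhoU_low hr0 hr (hV.mem_nhds hxV)] with n h1 h2
  calc ENNReal.ofReal (c ^ n) ≤ ENNReal.ofReal ((b * r) ^ n) := by
        apply ENNReal.ofReal_le_ofReal; rw [mul_comm]; gcongr
    _ = ENNReal.ofReal (b ^ n) * ENNReal.ofReal (r ^ n) := by
        rw [← ENNReal.ofReal_mul (by positivity), mul_pow]
    _ ≤ ENNReal.ofReal (b ^ n) * P n V := by gcongr
    _ = ∫⁻ x in V, ENNReal.ofReal (b ^ n) ∂(P n) := by simp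
    _ ≤ ∫⁻ x in V, g n x ∂(P n) := setLIntegral_mono' hV.measurableSet
        (fun y hy => h1 y (hVW hy))
    _ ≤ _ := setLIntegral_le_lintegral _ _

end rho

lemma ofReal_int {E : Type*} [TopologicalSpace E] [MeasurableSpace E] [BorelSpace E]
    (μ : Measure E) [IsProbabilityMeasure μ] {f : E → ℝ} (hf : Continuous f) (h0 : ∀ x, 0 ≤ f x)
    {M : ℝ} (hM : ∀ x, f x ≤ M) (n : ℕ) :
    ENNReal.ofReal (∫ x, f x ^ n ∂μ) = ∫⁻ x, ENNReal.ofReal (f x ^ n) ∂μ := by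
  refine ofReal_integral_eq_lintegral_ofReal ?_ (Eventually.of_forall fun x => pow_nonneg (h0 x) n)
  refine Integrable.of_bound (hf.pow n).measurable.aestronglyMeasurable (M ^ n)
    (Eventually.of_forall fun x => ?_)
  rw [Real.norm_of_nonneg (pow_nonneg (h0 x) n)]
  exact pow_le_pow_left₀ (h0 x) (hM x) n

lemma root_pow {I : ℝ} (hI : 0 ≤ I) {n : ℕ} (hn : n ≠ 0) : (I ^ ((n : ℝ)⁻¹)) ^ n = I :=
  Real.rpow_inv_natCast_pow hI hn

lemma ker_unif (x : S) (p : ℕ → S → Prop)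
    (h : ∀ xs : ℕ → S, Tendsto xs atTop (𝓝 x) → ∀ᶠ n in atTop, p n (xs n)) :
    ∃ V ∈ 𝓝 x, ∀ᶠ n in atTop, ∀ x' ∈ V, p n x' := by
  by_contra hcon
  push Not at hcon
  have hk : ∀ k : ℕ, ∃ᶠ n in atTop, ∃ x' ∈ ball x (1 / ((k : ℝ) + 1)), ¬ p n x' :=
    fun k => hcon _ (ball_mem_nhds x (by positivity))
  obtain ⟨φ, hφ, hy⟩ := extraction_forall_of_frequently hk
  choose y hyb hyp using hy
  have ht : Tendsto (Function.extend φ y (fun _ => x)) atTop (𝓝 x) := by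
    rw [Metric.tendsto_atTop]
    intro ε hε
    obtain ⟨k0, hk0⟩ := exists_nat_one_div_lt hε
    refine ⟨φ k0, fun n hn => ?_⟩
    by_cases hex : ∃ k, φ k = n
    · obtain ⟨k, rfl⟩ := hex
      rw [hφ.injective.extend_apply]
      refine lt_of_lt_of_le (hyb k) (le_trans ?_ hk0.le)
      have : k0 ≤ k := hφ.le_iff_le.1 hn
      apply one_div_le_one_div_of_le (by positivity)
      have : (k0 : ℝ) ≤ k := by exact_mod_cast this
      linarith
    · rw [Function.extend_apply' _ _ _ hex]; simpa using hε
  obtain ⟨N, hN⟩ := eventually_atTop.1 (h _ ht)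
  have := hN (φ N) (hφ.id_le N)
  rw [hφ.injective.extend_apply] at this
  exact hyp N this

section ker

variable [MeasurableSpace S]
    [MeasurableSpace C(ℝ≥0, S)] [BorelSpace C(ℝ≥0, S)]
    {Px : S → C(ℝ≥0, S) → ℝ} {A : Set S}
    {K : ℕ → ProbabilityTheory.Kernel S C(ℝ≥0, S)}

lemma kerU (hyp : DevSetup S Px A)
    (hK : ∀ n, ProbabilityTheory.IsMarkovKernel (K n))
    (hKLD : ∀ (x : S) (xs : ℕ → S), Tendsto xs atTop (𝓝 x) →
      LDConv (fun n => K n (xs n)) (fun n => n) (Px x))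
    {F : Set S} (hF : IsClosed F) (t : ℝ≥0) (x : S) {ε : ℝ} (hε : 0 < ε) :
    ∃ V ∈ 𝓝 x, ∀ᶠ n in atTop, ∀ x' ∈ V, K n x' {X : C(ℝ≥0, S) | X t ∈ F} ≤
      ENNReal.ofReal (((⨆ y ∈ F, transDen Px x t y) + ε) ^ n) := by
  refine ker_unif x _ fun xs hxs => ?_
  set h := ⨆ y ∈ F, transDen Px x t y with hh
  have h0 : 0 ≤ h := bsup_nonneg fun y _ => hyp.T_nonneg _ _ _
  rcases le_or_gt 1 (h + ε) with h1 | h1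
  · refine Eventually.of_forall fun n => prob_le_one.trans ?_
    rw [ENNReal.one_le_ofReal]
    exact one_le_pow₀ h1
  set γ := h + ε / 2 with hγ
  have hC := (hyp.dev x).2.2 γ ⟨by positivity, by linarith⟩
  have hevc : Continuous fun X : C(ℝ≥0, S) => X t := continuous_eval_const t
  have hC' := hC.image hevc
  have hdisj : Disjoint ((fun X : C(ℝ≥0, S) => X t) '' {X | γ ≤ Px x X}) F := by
    rw [Set.disjoint_left]
    rintro _ ⟨X, hX, rfl⟩ hXF
    have e1 := hyp.le_T x t X
    have e2 : transDen Px x t (X t) ≤ h := le_bsup (f := fun y => transDen Px x t y) zero_le_one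
      (fun y _ => hyp.T_le_one _ _ _) hXF
    have e3 : γ ≤ Px x X := hX
    linarith
  obtain ⟨f, hf0, hf1, hf⟩ := exists_continuous_zero_one_of_isClosed hC'.isClosed hF hdisj
  have hconv := hKLD x xs hxs (fun X => f (X t)) (f.continuous.comp hevc) (fun X => (hf _).1)
    ⟨1, by rintro _ ⟨X, rfl⟩; exact (hf _).2⟩
  have hlim : (⨆ X : C(ℝ≥0, S), f (X t) * Px x X) < h + ε := by
    refine lt_of_le_of_lt (Real.iSup_le (fun X => ?_) (by positivity : 0 ≤ γ)) (by linarith)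
    by_cases hX : γ ≤ Px x X
    · have : f (X t) = 0 := hf0 ⟨X, hX, rfl⟩
      rw [this, zero_mul]; positivity
    · push Not at hX
      have := mul_le_mul (hf (X t)).2 hX.le (hyp.nonneg _ _) zero_le_one
      linarith
  filter_upwards [hconv.eventually (gt_mem_nhds hlim), eventually_ne_atTop 0] with n hn hn0
  have hI : 0 ≤ ∫ X, f (X t) ^ n ∂(K n (xs n)) :=
    integral_nonneg fun X => pow_nonneg (hf _).1 n
  have hle : ∫ X, f (X t) ^ n ∂(K n (xs n)) ≤ (h + ε) ^ n := by
    rw [← root_pow hI hn0]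
    exact pow_le_pow_left₀ (Real.rpow_nonneg hI _) hn.le n
  refine le_trans ?_ (ENNReal.ofReal_le_ofReal hle)
  rw [ofReal_int (f := fun X : C(ℝ≥0, S) => f (X t)) (K n (xs n))
    (f.continuous.comp hevc) (fun X => (hf _).1) (fun X => (hf _).2) n]
  have hm : MeasurableSet {X : C(ℝ≥0, S) | X t ∈ F} := (hF.preimage hevc).measurableSet
  rw [← lintegral_indicator_one hm]
  refine lintegral_mono fun X => ?_
  by_cases hX : X t ∈ F
  · have : f (X t) = 1 := hf1 hX
    simp [hX, this]
  · simp [hX]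

lemma kerL (hyp : DevSetup S Px A)
    (hK : ∀ n, ProbabilityTheory.IsMarkovKernel (K n))
    (hKLD : ∀ (x : S) (xs : ℕ → S), Tendsto xs atTop (𝓝 x) →
      LDConv (fun n => K n (xs n)) (fun n => n) (Px x))
    {G : Set S} (hG : IsOpen G) (t : ℝ≥0) (x : S) {y : S} (hy : y ∈ G) {b : ℝ} (hb0 : 0 ≤ b)
    (hb : b < transDen Px x t y) :
    ∃ V ∈ 𝓝 x, ∀ᶠ n in atTop, ∀ x' ∈ V, ENNReal.ofReal (b ^ n) ≤
      K n x' {X : C(ℝ≥0, S) | X t ∈ G} := by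
  refine ker_unif x _ fun xs hxs => ?_
  have hevc : Continuous fun X : C(ℝ≥0, S) => X t := continuous_eval_const t
  obtain ⟨f, hf0, hf1, hf⟩ := exists_continuous_zero_one_of_isClosed hG.isClosed_compl
    (isClosed_singleton (x := y)) (by simpa using hy)
  have hconv := hKLD x xs hxs (fun X => f (X t)) (f.continuous.comp hevc) (fun X => (hf _).1)
    ⟨1, by rintro _ ⟨X, rfl⟩; exact (hf _).2⟩
  have hlim : b < ⨆ X : C(ℝ≥0, S), f (X t) * Px x X := by
    obtain ⟨X, hX, hbX⟩ := DevSetup.lt_T hb0 hb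
    have h1 : f (X t) = 1 := hf1 hX
    refine hbX.trans_le ?_
    have : Px x X = f (X t) * Px x X := by rw [h1, one_mul]
    rw [this]
    refine le_ciSup (f := fun X : C(ℝ≥0, S) => f (X t) * Px x X) ⟨1, ?_⟩ X
    rintro _ ⟨X, rfl⟩
    exact mul_le_one₀ (hf _).2 (hyp.nonneg _ _) (hyp.le_one _ _)
  filter_upwards [hconv.eventually (lt_mem_nhds hlim), eventually_ne_atTop 0] with n hn hn0
  have hI : 0 ≤ ∫ X, f (X t) ^ n ∂(K n (xs n)) :=
    integral_nonneg fun X => pow_nonneg (hf _).1 n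
  have hle : b ^ n ≤ ∫ X, f (X t) ^ n ∂(K n (xs n)) := by
    rw [← root_pow hI hn0]
    exact pow_le_pow_left₀ hb0 hn.le n
  refine le_trans (ENNReal.ofReal_le_ofReal hle) ?_
  rw [ofReal_int (f := fun X : C(ℝ≥0, S) => f (X t)) (K n (xs n))
    (f.continuous.comp hevc) (fun X => (hf _).1) (fun X => (hf _).2) n]
  have hm : MeasurableSet {X : C(ℝ≥0, S) | X t ∈ G} := (hG.preimage hevc).measurableSet
  rw [← lintegral_indicator_one hm]
  refine lintegral_mono fun X => ?_
  by_cases hX : X t ∈ G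
  · simp only [hX, indicator_of_mem, mem_ofPred_eq, Pi.one_apply]
    rw [ENNReal.ofReal_le_one]
    exact pow_le_one₀ (hf _).1 (hf _).2
  · have : f (X t) = 0 := hf0 hX
    simp [this, hn0]

end ker

end ld

section uniq

variable {Px : S → C(ℝ≥0, S) → ℝ} {A : Set S} {PL : S → S → ℝ}

/-- max balance -/
def Bal (PL : S → S → ℝ) (A : Set S) (ρ : S → ℝ) : Prop :=
  ∀ A' A'' : Set S, A'.Nonempty → A''.Nonempty → Disjoint A' A'' → A' ∪ A'' = A →
        maxFlux PL ρ A' A'' = maxFlux PL ρ A'' A'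

lemma maxFlux_nonneg (h0 : ∀ x y, 0 ≤ PL x y) {ρ : S → ℝ} (hρ : ∀ x, ρ x ∈ Icc (0:ℝ) 1)
    (Γ Γ' : Set S) : 0 ≤ maxFlux PL ρ Γ Γ' :=
  bsup_nonneg fun x _ => mul_nonneg (hρ x).1 (bsup_nonneg fun y _ => h0 x y)

lemma le_maxFlux' (h0 : ∀ x y, 0 ≤ PL x y) (h1 : ∀ x y, PL x y ≤ 1) {ρ : S → ℝ}
    (hρ : ∀ x, ρ x ∈ Icc (0:ℝ) 1) {Γ Γ' : Set S} {x : S} (hx : x ∈ Γ) :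
    ρ x * (⨆ y ∈ Γ', PL x y) ≤ maxFlux PL ρ Γ Γ' :=
  le_bsup (f := fun x => ρ x * ⨆ y ∈ Γ', PL x y) zero_le_one
    (fun x _ => mul_le_one₀ (hρ x).2 (bsup_nonneg fun y _ => h0 x y)
      (bsup_le zero_le_one fun y _ => h1 x y)) hx

lemma le_maxFlux (h0 : ∀ x y, 0 ≤ PL x y) (h1 : ∀ x y, PL x y ≤ 1) {ρ : S → ℝ}
    (hρ : ∀ x, ρ x ∈ Icc (0:ℝ) 1) {Γ Γ' : Set S} {x y : S} (hx : x ∈ Γ) (hy : y ∈ Γ') :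
    ρ x * PL x y ≤ maxFlux PL ρ Γ Γ' :=
  (mul_le_mul_of_nonneg_left (le_bsup (f := fun y => PL x y) zero_le_one (fun y _ => h1 x y) hy)
    (hρ x).1).trans (le_maxFlux' h0 h1 hρ hx)

lemma bal_pos (h0 : ∀ x y, 0 ≤ PL x y) (h1 : ∀ x y, PL x y ≤ 1)
    (hpos : ∀ a ∈ A, ∀ b ∈ A, 0 < PL a b) {ρ : S → ℝ} (hρ : ∀ x, ρ x ∈ Icc (0:ℝ) 1)
    (hbal : Bal PL A ρ) (hnorm : (⨆ a ∈ A, ρ a) = 1) : ∀ a ∈ A, 0 < ρ a := by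
  intro b hb
  refine lt_of_le_of_ne (hρ b).1 fun hb0 => ?_
  obtain ⟨a, ha, hapos⟩ := lt_bsup (s := A) (f := ρ) le_rfl (by rw [hnorm]; exact one_pos)
  have hflux := hbal {a ∈ A | 0 < ρ a} {a ∈ A | ρ a = 0} ⟨a, ha, hapos⟩ ⟨b, hb, hb0.symm⟩
    (by
      rw [Set.disjoint_left]
      rintro x ⟨_, hx⟩ ⟨_, hx'⟩
      exact hx.ne' hx')
    (by
      ext x
      constructor
      · rintro (⟨h, _⟩ | ⟨h, _⟩) <;> exact h
      · intro h
        rcases (hρ x).1.eq_or_lt with h' | h'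
        · exact Or.inr ⟨h, h'.symm⟩
        · exact Or.inl ⟨h, h'⟩)
  have e1 : maxFlux PL ρ {a ∈ A | ρ a = 0} {a ∈ A | 0 < ρ a} ≤ 0 :=
    bsup_le le_rfl fun x hx => by rw [hx.2, zero_mul]
  have e2 := le_maxFlux h0 h1 hρ (Γ := {a ∈ A | 0 < ρ a}) (Γ' := {a ∈ A | ρ a = 0})
    (x := a) (y := b) ⟨ha, hapos⟩ ⟨hb, hb0.symm⟩
  have := mul_pos hapos (hpos a ha b hb)
  linarith

lemma bal_le (h0 : ∀ x y, 0 ≤ PL x y) (h1 : ∀ x y, PL x y ≤ 1)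
    (hpos : ∀ a ∈ A, ∀ b ∈ A, 0 < PL a b) (hfin : ∀ K : Set S, IsCompact K → (K ∩ A).Finite)
    {ρ ρ' : S → ℝ} (hρ : IsDeviabilityDensity ρ) (hρ' : IsDeviabilityDensity ρ')
    (hbal : Bal PL A ρ)
    (hbal' : Bal PL A ρ') (hnorm' : (⨆ a ∈ A, ρ' a) = 1) : ∀ a ∈ A, ρ a ≤ ρ' a := by
  have hpos' := bal_pos h0 h1 hpos hρ'.1 hbal' hnorm'
  have cross : ∀ a ∈ A, ∀ b ∈ A, ρ a * ρ' b ≤ ρ b * ρ' a := by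
    intro a ha b hb
    by_contra hcon
    push Not at hcon
    have hb' := hpos' b hb
    set u := ρ b / ρ' b with hu
    have hu0 : 0 ≤ u := div_nonneg (hρ.1 b).1 hb'.le
    have hub : ρ b = u * ρ' b := by rw [hu]; field_simp
    have hau : u * ρ' a < ρ a := by
      rw [hu, div_mul_eq_mul_div, div_lt_iff₀ hb']; exact hcon
    set A' := {c ∈ A | u * ρ' c < ρ c} with hA'
    set A'' := {c ∈ A | ρ c ≤ u * ρ' c} with hA''
    have hne : A'.Nonempty := ⟨a, ha, hau⟩
    have hne' : A''.Nonempty := ⟨b, hb, hub.le⟩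
    have hd : Disjoint A' A'' := by
      rw [Set.disjoint_left]
      rintro x ⟨_, hx⟩ ⟨_, hx'⟩
      exact absurd hx' (not_le.2 hx)
    have hun : A' ∪ A'' = A := by
      ext x
      constructor
      · rintro (⟨h, _⟩ | ⟨h, _⟩) <;> exact h
      · intro h
        rcases lt_or_ge (u * ρ' x) (ρ x) with h' | h'
        · exact Or.inl ⟨h, h'⟩
        · exact Or.inr ⟨h, h'⟩
    have B := hbal A' A'' hne hne' hd hun
    have B' := hbal' A' A'' hne hne' hd hun
    set m := maxFlux PL ρ' A' A'' with hm
    have hQ0 : ∀ x, 0 ≤ ⨆ y ∈ A'', PL x y := fun x => bsup_nonneg fun y _ => h0 x y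
    have hQ1 : ∀ x, (⨆ y ∈ A'', PL x y) ≤ 1 := fun x => bsup_le zero_le_one fun y _ => h1 x y
    have hm0 : 0 < m := lt_of_lt_of_le (mul_pos (hpos' a ha) (hpos a ha b hb))
      (le_maxFlux h0 h1 hρ'.1 (x := a) (y := b) ⟨ha, hau⟩ ⟨hb, hub.le⟩)
    have hm1 : m ≤ 1 := bsup_le zero_le_one fun x _ => mul_le_one₀ (hρ'.1 x).2 (hQ0 x) (hQ1 x)
    have hF : {c ∈ A' | m / 2 ≤ ρ' c}.Finite :=
      (hfin _ (hρ'.2.2 (m / 2) ⟨by positivity, by linarith⟩)).subset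
        (fun c hc => ⟨hc.2, hc.1.1⟩)
    obtain ⟨c0, hc0, hc0m⟩ := lt_bsup (s := A') (f := fun x => ρ' x * ⨆ y ∈ A'', PL x y)
      (by positivity) (show m / 2 < m by linarith)
    have hsmall : ∀ c, ρ' c * (⨆ y ∈ A'', PL c y) ≤ ρ' c := fun c =>
      mul_le_of_le_one_right (hρ'.1 c).1 (hQ1 c)
    obtain ⟨s, hs, hmax⟩ := Set.exists_max_image _ (fun x => ρ' x * ⨆ y ∈ A'', PL x y) hF
      ⟨c0, hc0, hc0m.le.trans (hsmall c0)⟩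
    have hms : m ≤ ρ' s * ⨆ y ∈ A'', PL s y := by
      refine bsup_le (mul_nonneg (hρ'.1 s).1 (hQ0 s)) fun c hc => ?_
      by_cases hcm : m / 2 ≤ ρ' c
      · exact hmax c ⟨hc, hcm⟩
      · push Not at hcm
        have e1 := hmax c0 ⟨hc0, hc0m.le.trans (hsmall c0)⟩
        have e2 := hsmall c
        linarith
    have hQs : 0 < ⨆ y ∈ A'', PL s y := by
      refine lt_of_le_of_ne (hQ0 s) fun h => ?_
      rw [← h, mul_zero] at hms
      linarith
    have e1 := le_maxFlux' h0 h1 hρ.1 (Γ := A') (Γ' := A'') hs.1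
    have e2 : maxFlux PL ρ A'' A' ≤ u * m := by
      rw [B']
      refine bsup_le (mul_nonneg hu0 (maxFlux_nonneg h0 hρ'.1 _ _)) fun c hc => ?_
      have e3 := le_maxFlux' h0 h1 hρ'.1 (Γ := A'') (Γ' := A') hc
      have e4 : 0 ≤ ⨆ y ∈ A', PL c y := bsup_nonneg fun y _ => h0 c y
      calc ρ c * (⨆ y ∈ A', PL c y) ≤ u * ρ' c * (⨆ y ∈ A', PL c y) :=
            mul_le_mul_of_nonneg_right hc.2 e4
        _ = u * (ρ' c * (⨆ y ∈ A', PL c y)) := by ring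
        _ ≤ _ := mul_le_mul_of_nonneg_left e3 hu0
    have e5 : u * ρ' s * (⨆ y ∈ A'', PL s y) < ρ s * (⨆ y ∈ A'', PL s y) :=
      mul_lt_mul_of_pos_right hs.1.2 hQs
    have e6 := mul_le_mul_of_nonneg_left hms hu0
    rw [mul_assoc] at e5
    linarith
  intro a ha
  have := bsup_mul_le (s := A) (f := ρ') (B := ρ a) (C := ρ' a) (hρ.1 a).1 (hρ'.1 a).1
    (fun b hb => by
      have e1 := cross a ha b hb
      have e2 := mul_le_of_le_one_left (hρ'.1 a).1 (hρ.1 b).2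
      linarith)
  rwa [hnorm', one_mul] at this

end uniq

section core

/-- All the standing data along an ultrafilter. -/
structure Ctx [MeasurableSpace S]
    [MeasurableSpace C(ℝ≥0, S)]
    (Px : S → C(ℝ≥0, S) → ℝ) (A : Set S) (PL : S → S → ℝ)
    (K : ℕ → ProbabilityTheory.Kernel S C(ℝ≥0, S)) (P : ℕ → Measure S) (U : Ultrafilter ℕ) :
    Prop where
  hyp : DevSetup S Px A
  hPL : ∀ x y : S, Tendsto (fun t : ℝ≥0 => transDen Px x t y) atTop (𝓝 (PL x y))
  hK : ∀ n, ProbabilityTheory.IsMarkovKernel (K n)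
  hKLD : ∀ (x : S) (xs : ℕ → S), Tendsto xs atTop (𝓝 x) →
      LDConv (fun n => K n (xs n)) (fun n => n) (Px x)
  hP : ∀ n, IsProbabilityMeasure (P n)
  hinv : ∀ n (t : ℝ≥0) (Γ : Set S), MeasurableSet Γ →
      (∫⁻ x, K n x {X : C(ℝ≥0, S) | X t ∈ Γ} ∂(P n)) = P n Γ
  hU : (U : Filter ℕ) ≤ atTop
  hT : ∀ η : ℝ, 0 < η → ∃ Kc : Set S, IsCompact Kc ∧
      ∀ᶠ n in (U : Filter ℕ), P n Kcᶜ ≤ ENNReal.ofReal (η ^ n)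

variable [MeasurableSpace S] [BorelSpace S] [MeasurableSpace C(ℝ≥0, S)] [BorelSpace C(ℝ≥0, S)]
    {Px : S → C(ℝ≥0, S) → ℝ} {A : Set S} {PL : S → S → ℝ}
    {K : ℕ → ProbabilityTheory.Kernel S C(ℝ≥0, S)} {P : ℕ → Measure S} {U : Ultrafilter ℕ}

lemma pow_contra {c d : ℝ} (hc : 0 ≤ c) (hcd : c < d) {n : ℕ} (hn : n ≠ 0)
    (h : ENNReal.ofReal (d ^ n) ≤ ENNReal.ofReal (c ^ n)) : False := by
  rw [ENNReal.ofReal_le_ofReal_iff (by positivity)] at h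
  exact absurd h (not_le.2 (pow_lt_pow_left₀ hcd hc hn))

lemma Ctx.subinv (H : Ctx Px A PL K P U) (x t y) :
    rhoU U P x * transDen Px x t y ≤ rhoU U P y := by
  by_contra hcon
  push Not at hcon
  obtain ⟨d, hd1, hd2⟩ := exists_between hcon
  obtain ⟨c, hc1, hc2⟩ := exists_between hd1
  have hc0 := (rhoU_nonneg (U := U) (P := P) y).trans hc1.le
  obtain ⟨V, hV, hyV, hPV⟩ := rhoU_up H.hP hc1
  have hl := ldLB (U := U) (P := P) (fun n x => K n x {X : C(ℝ≥0, S) | X t ∈ V}) x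
    (H.hyp.T_nonneg x t y) (fun b hb0 hb => by
      obtain ⟨W, hW, h⟩ := kerL H.hyp H.hK H.hKLD hV t x hyV hb0 hb
      exact ⟨W, hW, H.hU h⟩) (hc0.trans hc2.le) hd2
  obtain ⟨n, h1, h2, h3⟩ := (hl.and (hPV.and (H.hU (eventually_ne_atTop 0)))).exists
  rw [H.hinv n t V hV.measurableSet] at h1
  exact pow_contra hc0 hc2 h3 (h1.trans h2)

lemma Ctx.subPL (H : Ctx Px A PL K P U) (x y) :
    rhoU U P x * PL x y ≤ rhoU U P y :=
  le_of_tendsto' ((H.hPL x y).const_mul _) fun t => H.subinv x t y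

lemma Ctx.icc (H : Ctx Px A PL K P U) (x) : rhoU U P x ∈ Icc (0:ℝ) 1 :=
  ⟨rhoU_nonneg x, rhoU_le_one H.hP x⟩

lemma Ctx.dev (H : Ctx Px A PL K P U) : IsDeviabilityDensity (rhoU U P) := by
  refine ⟨H.icc, ?_, ?_⟩
  · have hb : BddAbove (range (rhoU U P)) := ⟨1, by rintro _ ⟨x, rfl⟩; exact (H.icc x).2⟩
    refine le_antisymm (Real.iSup_le (fun x => (H.icc x).2) zero_le_one) (le_of_not_gt fun hlt => ?_)
    set c := ⨆ x, rhoU U P x with hc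
    have hc0 : 0 ≤ c := Real.iSup_nonneg fun x => (H.icc x).1
    have := ldUB H.hU H.hP H.hT (fun _ _ => 1) (fun _ => 1) (fun _ => zero_le_one) one_pos
      (by simp) (fun x ε hε => ⟨univ, univ_mem, Eventually.of_forall fun n x' _ => by
        rw [ENNReal.one_le_ofReal]
        exact one_le_pow₀ (by linarith)⟩) hc0 (fun x => by
        rw [mul_one]; exact le_ciSup hb x) (by linarith : 0 < (1 - c) / 2)
    obtain ⟨n, h1, h2⟩ := (this.and (H.hU (eventually_ne_atTop 0))).exists
    have := H.hP n
    refine pow_contra (c := c + (1 - c) / 2) (d := 1) (by linarith) (by linarith) h2 ?_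
    simpa using h1
  · rintro γ ⟨hγ, hγ1⟩
    obtain ⟨Kc, hKc, hKP⟩ := H.hT (γ / 2) (by positivity)
    refine hKc.of_isClosed_subset ?_ ?_
    · rw [← isOpen_compl_iff, isOpen_iff_mem_nhds]
      intro x hx
      have hx' : rhoU U P x < γ := not_le.1 hx
      obtain ⟨c, hc1, hc2⟩ := exists_between hx'
      obtain ⟨V, hV, hxV, hPV⟩ := rhoU_up H.hP hc1
      refine Filter.mem_of_superset (hV.mem_nhds hxV) fun y hy hyγ => ?_
      have h1 := rhoU_le ((H.icc x).1.trans hc1.le) (hV.mem_nhds hy) hPV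
      have h2 : γ ≤ rhoU U P y := hyγ
      linarith
    · intro x hx
      by_contra hxK
      have h1 := rhoU_le (by positivity) (hKc.isClosed.isOpen_compl.mem_nhds hxK) hKP
      have h2 : γ ≤ rhoU U P x := hx
      linarith

/-- near-attainment of the invariance equation at large times -/
lemma Ctx.back (H : Ctx Px A PL K P U) {y : S} {c : ℝ} (hc0 : 0 < c) (hc : c < rhoU U P y)
    (t : ℝ≥0) : ∃ s ≥ t, ∃ x, c < rhoU U P x * transDen Px x s y := by
  by_contra hcon
  push Not at hcon
  obtain ⟨ε, e0, e1, -, -, hε⟩ := exists_eps hc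
  obtain ⟨δ, hδ, t₀, t₁, hloc⟩ := H.hyp.localMove y ε e0
  have hε' : 0 < 1 - ε := by linarith
  have hlt : c / (1 - ε) < rhoU U P y := by rw [div_lt_iff₀' hε']; exact hε
  obtain ⟨d, hd1, hd2⟩ := exists_between hlt
  have := ldUB H.hU H.hP H.hT
    (fun n x => K n x {X : C(ℝ≥0, S) | X t ∈ closedBall y (δ / 2)})
    (fun x => ⨆ y' ∈ closedBall y (δ / 2), transDen Px x t y')
    (fun x => bsup_nonneg fun _ _ => H.hyp.T_nonneg _ _ _) one_pos
    (Eventually.of_forall fun n x => by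
      have := H.hK n
      simpa using prob_le_one)
    (fun x η hη => by
      obtain ⟨V, hV, h⟩ := kerU H.hyp H.hK H.hKLD (isClosed_closedBall (x := y) (ε := δ / 2)) t x hη
      exact ⟨V, hV, H.hU h⟩)
    (c := c / (1 - ε)) (by positivity)
    (fun x => by
      rw [mul_comm]
      refine bsup_mul_le (H.icc x).1 (by positivity) fun y' hy' => ?_
      rw [le_div_iff₀ hε']
      have h1 := (hloc y' (by rw [dist_comm]; exact lt_of_le_of_lt hy' (by linarith))).2
      have h2 := hcon (t + t₁) le_self_add x
      have h3 := H.hyp.T_comp x y' y t t₁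
      calc transDen Px x t y' * rhoU U P x * (1 - ε)
          = rhoU U P x * (transDen Px x t y' * (1 - ε)) := by ring
        _ ≤ rhoU U P x * (transDen Px x t y' * transDen Px y' t₁ y) :=
          mul_le_mul_of_nonneg_left (mul_le_mul_of_nonneg_left h1.le (H.hyp.T_nonneg _ _ _))
            (H.icc x).1
        _ ≤ rhoU U P x * transDen Px x (t + t₁) y :=
          mul_le_mul_of_nonneg_left h3 (H.icc x).1
        _ ≤ c := h2)
    (by linarith : 0 < d - c / (1 - ε))
  have hle := rhoU_le (U := U) (P := P) (x := y) (c := d) ((by positivity : 0 ≤ c / (1 - ε)).trans hd1.le)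
    (closedBall_mem_nhds y (by positivity : 0 < δ / 2)) (by
      filter_upwards [this] with n hn
      rw [H.hinv n t _ isClosed_closedBall.measurableSet] at hn
      simpa using hn)
  linarith

lemma Ctx.mulPL (H : Ctx Px A PL K P U) {x y : S} {a : S} {u v ε γ : ℝ} (hu : 0 ≤ u) (hv : 0 ≤ v)
    (hε1 : ε < 1) (hγ : γ < rhoU U P x * (u * v))
    (h1 : (1 - ε) * u ≤ PL x a) (h2 : (1 - ε) * v ≤ PL a y) :
    (1 - ε) ^ 2 * γ < rhoU U P a * PL a y := by
  have hε' : 0 < 1 - ε := by linarith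
  calc (1 - ε) ^ 2 * γ < (1 - ε) ^ 2 * (rhoU U P x * (u * v)) := by gcongr
    _ = rhoU U P x * (((1 - ε) * u) * ((1 - ε) * v)) := by ring
    _ ≤ rhoU U P x * (PL x a * PL a y) := by
      have := (H.icc x).1
      have := H.hyp.PL_nonneg H.hPL x a
      gcongr
    _ = rhoU U P x * PL x a * PL a y := by ring
    _ ≤ _ := mul_le_mul_of_nonneg_right (H.subPL x a) (H.hyp.PL_nonneg H.hPL _ _)

lemma Ctx.repr (H : Ctx Px A PL K P U) (y : S) :
    rhoU U P y = ⨆ a ∈ A, rhoU U P a * PL a y := by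
  refine le_antisymm ?_ (bsup_le (H.icc y).1 fun a _ => H.subPL a y)
  by_contra hcon
  push Not at hcon
  set m := ⨆ a ∈ A, rhoU U P a * PL a y with hm
  have hm0 : 0 ≤ m := bsup_nonneg fun a _ => mul_nonneg (H.icc a).1 (H.hyp.PL_nonneg H.hPL _ _)
  obtain ⟨γ, hγ1, hγ2⟩ := exists_between hcon
  have hγ0 : 0 < γ := hm0.trans_lt hγ1
  obtain ⟨ε, e0, e1, -, hε, -⟩ := exists_eps hγ1
  obtain ⟨t₀, ht₀⟩ := H.hyp.through H.hPL (fun x => (H.icc x).1) (fun x => (H.icc x).2)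
    H.dev.2.2 H.subinv hγ0 e0
  obtain ⟨t, ht, x, hx⟩ := H.back hγ0 hγ2 t₀
  obtain ⟨a, ha, u, v, hu0, hu1, hv0, hv1, huv, h1, h2⟩ := ht₀ t ht x y hx
  have h3 := H.mulPL hu0 hv0 e1 huv h1 h2
  have h4 : rhoU U P a * PL a y ≤ m := le_bsup (f := fun a => rhoU U P a * PL a y) zero_le_one
    (fun a _ => mul_le_one₀ (H.icc a).2 (H.hyp.PL_nonneg H.hPL _ _) (H.hyp.PL_le_one H.hPL _ _)) ha
  linarith

lemma Ctx.norm (H : Ctx Px A PL K P U) : (⨆ a ∈ A, rhoU U P a) = 1 := by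
  refine le_antisymm (bsup_le zero_le_one fun a _ => (H.icc a).2) ?_
  rw [← H.dev.2.1]
  have h0 : 0 ≤ ⨆ a ∈ A, rhoU U P a := bsup_nonneg fun a _ => (H.icc a).1
  refine Real.iSup_le (fun x => ?_) h0
  rw [H.repr x]
  refine bsup_le h0 fun a ha => ?_
  refine (mul_le_of_le_one_right (H.icc a).1 (H.hyp.PL_le_one H.hPL a x)).trans ?_
  exact le_bsup (f := rhoU U P) zero_le_one (fun a _ => (H.icc a).2) ha

lemma Ctx.psi_cont (H : Ctx Px A PL K P U) (Γ : Set S) :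
    Continuous fun x => ⨆ a ∈ Γ, rhoU U P a * PL a x := by
  have hx0 : ∀ x, 0 ≤ ⨆ a ∈ Γ, rhoU U P a * PL a x := fun x =>
    bsup_nonneg fun a _ => mul_nonneg (H.icc a).1 (H.hyp.PL_nonneg H.hPL _ _)
  have hb : ∀ a x, rhoU U P a * PL a x ≤ 1 := fun a x =>
    mul_le_one₀ (H.icc a).2 (H.hyp.PL_nonneg H.hPL _ _) (H.hyp.PL_le_one H.hPL _ _)
  have hx1 : ∀ x, (⨆ a ∈ Γ, rhoU U P a * PL a x) ≤ 1 := fun x =>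
    bsup_le zero_le_one fun a _ => hb a x
  have step : ∀ x t y, (⨆ a ∈ Γ, rhoU U P a * PL a x) * transDen Px x t y ≤
      ⨆ a ∈ Γ, rhoU U P a * PL a y := by
    intro x t y
    refine bsup_mul_le (H.hyp.T_nonneg _ _ _) (hx0 y) fun a ha => ?_
    rw [mul_assoc]
    exact (mul_le_mul_of_nonneg_left (H.hyp.PL_right H.hPL a x y t) (H.icc a).1).trans
      (le_bsup (f := fun a => rhoU U P a * PL a y) zero_le_one (fun a _ => hb a y) ha)
  rw [Metric.continuous_iff]
  intro x ε hε
  obtain ⟨δ, hδ, t₀, t₁, hloc⟩ := H.hyp.localMove x (ε / 2) (by positivity)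
  refine ⟨δ, hδ, fun y hy => ?_⟩
  obtain ⟨h0, h1⟩ := hloc y (by rwa [dist_comm])
  have s0 := step x t₀ y
  have s1 := step y t₁ x
  have := hx0 x
  have := hx0 y
  have := hx1 x
  have := hx1 y
  rw [Real.dist_eq, abs_lt]
  constructor <;> nlinarith

lemma Ctx.flux_eq (H : Ctx Px A PL K P U) (n : ℕ) (t : ℝ≥0) {W : Set S} (hW : MeasurableSet W) :
    ∫⁻ x in Wᶜ, K n x {X : C(ℝ≥0, S) | X t ∈ W} ∂(P n) =
      ∫⁻ x in W, K n x {X : C(ℝ≥0, S) | X t ∈ Wᶜ} ∂(P n) := by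
  have := H.hP n
  have := H.hK n
  have hevm : Measurable fun X : C(ℝ≥0, S) => X t :=
    (continuous_eval_const (F := C(ℝ≥0, S)) t).measurable
  have m1 : MeasurableSet {X : C(ℝ≥0, S) | X t ∈ W} := hevm hW
  have e1 : ∫⁻ x in W, K n x {X : C(ℝ≥0, S) | X t ∈ W} ∂(P n) +
      ∫⁻ x in Wᶜ, K n x {X : C(ℝ≥0, S) | X t ∈ W} ∂(P n) = P n W := by
    rw [lintegral_add_compl _ hW, H.hinv n t W hW]
  have e2 : ∫⁻ x in W, K n x {X : C(ℝ≥0, S) | X t ∈ W} ∂(P n) +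
      ∫⁻ x in W, K n x {X : C(ℝ≥0, S) | X t ∈ Wᶜ} ∂(P n) = P n W := by
    rw [← lintegral_add_left ((K n).measurable_coe m1)]
    have : ∀ x, K n x {X : C(ℝ≥0, S) | X t ∈ W} + K n x {X : C(ℝ≥0, S) | X t ∈ Wᶜ} = 1 :=
      fun x => prob_add_prob_compl m1
    rw [lintegral_congr this]; simp
  have hfin : ∫⁻ x in W, K n x {X : C(ℝ≥0, S) | X t ∈ W} ∂(P n) ≠ ⊤ := by
    refine ne_top_of_le_ne_top (measure_ne_top (P n) W) ?_
    rw [← e1]; exact le_self_add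
  exact (ENNReal.add_right_inj hfin).1 (e1.trans e2.symm)

end core

section final

variable [MeasurableSpace S] [BorelSpace S] [MeasurableSpace C(ℝ≥0, S)] [BorelSpace C(ℝ≥0, S)]
    {Px : S → C(ℝ≥0, S) → ℝ} {A : Set S} {PL : S → S → ℝ}
    {K : ℕ → ProbabilityTheory.Kernel S C(ℝ≥0, S)} {P : ℕ → Measure S} {U : Ultrafilter ℕ}

lemma Ctx.psi_flux (H : Ctx Px A PL K P U) (Γ Γ' : Set S) (x : S) {b : S} (hb : b ∈ Γ') :
    (⨆ a ∈ Γ, rhoU U P a * PL a x) * PL x b ≤ maxFlux PL (rhoU U P) Γ Γ' := by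
  have h0 := H.hyp.PL_nonneg H.hPL
  have h1 := H.hyp.PL_le_one H.hPL
  refine bsup_mul_le (h0 _ _) (maxFlux_nonneg h0 H.icc _ _) fun a ha => ?_
  rw [mul_assoc]
  exact (mul_le_mul_of_nonneg_left (H.hyp.PL_comp H.hPL a x b) (H.icc a).1).trans
    (le_maxFlux h0 h1 H.icc ha hb)

lemma Ctx.le_psi (H : Ctx Px A PL K P U) (Γ : Set S) (x : S) {a : S} (ha : a ∈ Γ) :
    rhoU U P a * PL a x ≤ ⨆ a ∈ Γ, rhoU U P a * PL a x :=
  le_bsup (f := fun a => rhoU U P a * PL a x) zero_le_one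
    (fun a _ => mul_le_one₀ (H.icc a).2 (H.hyp.PL_nonneg H.hPL _ _) (H.hyp.PL_le_one H.hPL _ _)) ha

lemma Ctx.bal_claim (H : Ctx Px A PL K P U) {A' A'' : Set S} (hun : A' ∪ A'' = A)
    {φ φ2 c ε : ℝ} (hφ : maxFlux PL (rhoU U P) A' A'' = φ)
    (hφ2 : maxFlux PL (rhoU U P) A'' A' = φ2) (hφ0 : 0 < φ) (hc0 : 0 < c)
    (e0 : 0 < ε) (e1 : ε < 1) (h1 : φ2 < (1 - ε) ^ 4 * c) (h2 : c < (1 - ε) ^ 4 * φ)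
    {x y a : S} {u v : ℝ} (hx : c ≤ ⨆ a ∈ A'', rhoU U P a * PL a x)
    (hy : (⨆ a ∈ A'', rhoU U P a * PL a y) ≤ c) (ha : a ∈ A) (hu0 : 0 ≤ u)
    (hv0 : 0 ≤ v) (hv1 : v ≤ 1) (huv : (1 - ε) * φ < rhoU U P x * (u * v))
    (hxa : (1 - ε) * u ≤ PL x a) (hay : (1 - ε) * v ≤ PL a y) : False := by
  set q := 1 - ε with hq
  have hq0 : 0 < q := by linarith
  have hq1 : q < 1 := by linarith
  have hq43 : q ^ 4 ≤ q ^ 3 := pow_le_pow_of_le_one hq0.le hq1.le (by norm_num)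
  have hq32 : q ^ 3 ≤ q ^ 2 := pow_le_pow_of_le_one hq0.le hq1.le (by norm_num)
  have hr := H.icc x
  have hxu : q * φ < rhoU U P x * u := huv.trans_le
    (mul_le_mul_of_nonneg_left (mul_le_of_le_one_right hu0 hv1) hr.1)
  rw [← hun] at ha
  rcases ha with ha | ha
  · set ψ := ⨆ a ∈ A'', rhoU U P a * PL a x with hψ
    have hψ0 : 0 < ψ := hc0.trans_le hx
    have k1 : ψ * (q * u) ≤ φ2 := by
      rw [← hφ2]
      exact (mul_le_mul_of_nonneg_left hxa hψ0.le).trans (H.psi_flux A'' A' x ha)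
    obtain ⟨b, hb, hbx⟩ := H.hyp.toA H.hPL x e0 e1
    rw [← hq] at hbx
    have hb' := hb
    rw [← hun] at hb'
    rcases hb' with hb' | hb'
    · have k2 : ψ * q ^ 2 ≤ φ2 := by
        rw [← hφ2]
        exact (mul_le_mul_of_nonneg_left hbx hψ0.le).trans (H.psi_flux A'' A' x hb')
      have k3 : c * q ^ 2 ≤ ψ * q ^ 2 := by gcongr
      have k4 : q ^ 4 * c ≤ q ^ 2 * c := mul_le_mul_of_nonneg_right (hq43.trans hq32) hc0.le
      linarith
    · set ψ' := ⨆ a ∈ A', rhoU U P a * PL a x with hψ'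
      have hmax : rhoU U P x ≤ max ψ ψ' := by
        rw [H.repr x]
        refine bsup_le (hψ0.le.trans (le_max_left _ _)) fun a ha => ?_
        rw [← hun] at ha
        rcases ha with ha | ha
        · exact (H.le_psi A' x ha).trans (le_max_right _ _)
        · exact (H.le_psi A'' x ha).trans (le_max_left _ _)
      rcases le_max_iff.1 hmax with hm | hm
      · have k2 : rhoU U P x * u ≤ ψ * u := by gcongr
        have k3 : q * (q * φ) ≤ q * (ψ * u) := mul_le_mul_of_nonneg_left (hxu.le.trans k2) hq0.le
        have k4 : q ^ 4 * φ ≤ q ^ 2 * φ := mul_le_mul_of_nonneg_right (hq43.trans hq32) hφ0.le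
        have k5 : q ^ 4 * c ≤ 1 * c := by gcongr; exact pow_le_one₀ hq0.le hq1.le
        nlinarith
      · have k2 : rhoU U P x * q ^ 2 ≤ φ := by
          rw [← hφ]
          refine (mul_le_mul hm hbx (by positivity) (hr.1.trans hm)).trans
            (H.psi_flux A' A'' x hb')
        have k3 : q ^ 3 < u := by
          by_contra hcon
          push Not at hcon
          have j1 : q ^ 2 * (q * φ) < q ^ 2 * (rhoU U P x * u) := by gcongr
          have j2 : (rhoU U P x * q ^ 2) * u ≤ φ * u := by gcongr
          have j3 : φ * u ≤ φ * q ^ 3 := by gcongr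
          nlinarith
        have k4 : c * (q * q ^ 3) ≤ ψ * (q * u) := by gcongr
        nlinarith
  · have k1 := H.mulPL hu0 hv0 e1 huv hxa hay
    have k2 := H.le_psi A'' y ha
    rw [← hq] at k1
    have k3 : q ^ 4 * φ ≤ q ^ 3 * φ := by gcongr
    nlinarith

lemma Ctx.bal_half (H : Ctx Px A PL K P U) {A' A'' : Set S} (hun : A' ∪ A'' = A) :
    maxFlux PL (rhoU U P) A' A'' ≤ maxFlux PL (rhoU U P) A'' A' := by
  have h0 := H.hyp.PL_nonneg H.hPL
  have h1 := H.hyp.PL_le_one H.hPL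
  by_contra hcon
  push Not at hcon
  obtain ⟨φ, hφ⟩ : ∃ φ, maxFlux PL (rhoU U P) A' A'' = φ := ⟨_, rfl⟩
  obtain ⟨φ2, hφ2⟩ : ∃ φ, maxFlux PL (rhoU U P) A'' A' = φ := ⟨_, rfl⟩
  have hφ20 : 0 ≤ φ2 := hφ2 ▸ maxFlux_nonneg h0 H.icc _ _
  rw [hφ, hφ2] at hcon
  obtain ⟨c, hc1, hc2⟩ := exists_between hcon
  have hc0 : 0 < c := hφ20.trans_lt hc1
  have hφ0 : 0 < φ := hc0.trans hc2
  obtain ⟨ε, e0, e1, hε, -, -⟩ := exists_eps (a := max (φ2 / c) (c / φ)) (b := 1)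
    (max_lt ((div_lt_one hc0).2 hc1) ((div_lt_one hφ0).2 hc2))
  rw [mul_one] at hε
  have he1 : φ2 < (1 - ε) ^ 4 * c := by
    rw [← div_lt_iff₀ hc0]; exact (le_max_left _ _).trans_lt hε
  have he2 : c < (1 - ε) ^ 4 * φ := by
    rw [← div_lt_iff₀ hφ0]; exact (le_max_right _ _).trans_lt hε
  have hq0 : 0 < 1 - ε := by linarith
  have hq1 : 1 - ε < 1 := by linarith
  set φ' := (1 - ε) * φ with hφ'
  have hφ'0 : 0 < φ' := by positivity
  have hφ'1 : φ' < φ := by nlinarith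
  obtain ⟨t₀, ht₀⟩ := H.hyp.through H.hPL (fun x => (H.icc x).1) (fun x => (H.icc x).2)
    H.dev.2.2 H.subinv hφ'0 e0
  set ψ : S → ℝ := fun x => ⨆ a ∈ A'', rhoU U P a * PL a x with hψ
  have hψc : Continuous ψ := H.psi_cont A''
  have claim : ∀ t ≥ t₀, ∀ x y, c ≤ ψ x → ψ y ≤ c → rhoU U P x * transDen Px x t y ≤ φ' := by
    intro t ht x y hx hy
    by_contra hcl
    push Not at hcl
    obtain ⟨a, ha, u, v, hu0, hu1, hv0, hv1, huv, k1, k2⟩ := ht₀ t ht x y hcl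
    exact H.bal_claim hun hφ hφ2 hφ0 hc0 e0 e1 he1 he2 hx hy ha hu0 hv0 hv1 huv k1 k2
  obtain ⟨d, hd1, hd2⟩ := exists_between (max_lt hφ'1 hc2)
  have hdφ : φ' < d := (le_max_left _ _).trans_lt hd1
  have hdc : c < d := (le_max_right _ _).trans_lt hd1
  have hd0 : 0 < d := hc0.trans hdc
  rw [← hφ] at hd2
  obtain ⟨a', ha', hd3⟩ := lt_bsup hd0.le hd2
  rw [mul_comm] at hd3
  obtain ⟨b, hb, hd4⟩ : ∃ b ∈ A'', d < rhoU U P a' * PL a' b := by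
    by_contra hno
    push Not at hno
    exact absurd (bsup_mul_le (H.icc a').1 hd0.le fun y hy => by
      rw [mul_comm]; exact hno y hy) (not_le.2 hd3)
  obtain ⟨t, ht5, ht6⟩ := ((((H.hPL a' b).const_mul (rhoU U P a')).eventually
    (lt_mem_nhds hd4)).and (eventually_ge_atTop t₀)).exists
  have haA : a' ∈ A := hun ▸ Or.inl ha'
  have hbA : b ∈ A := hun ▸ Or.inr hb
  have hψa : ψ a' < c := by
    have := H.psi_flux A'' A' a' ha'
    rw [H.hyp.PL_self H.hPL haA, mul_one, hφ2] at this
    exact this.trans_lt hc1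
  have hψb : c < ψ b := by
    have k := H.le_psi A'' b hb
    rw [H.hyp.PL_self H.hPL hbA, mul_one] at k
    have k2 := H.subinv a' t b
    exact (hdc.trans ht5).trans_le (k2.trans k)
  set W : Set S := {x | c < ψ x} with hW
  have hWo : IsOpen W := isOpen_lt continuous_const hψc
  have hLo : IsOpen {x | ψ x < c} := isOpen_lt hψc continuous_const
  have hWm := hWo.measurableSet
  have hdisj : ∀ x, ψ x < c → x ∉ W := fun x hx hx' => lt_asymm hx hx'
  have L := ldLB (U := U) (P := P)
    (fun n => (Wᶜ).indicator fun x => K n x {X : C(ℝ≥0, S) | X t ∈ W}) a'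
    (H.hyp.T_nonneg a' t b) (fun p hp0 hp => by
      obtain ⟨V, hV, h⟩ := kerL H.hyp H.hK H.hKLD hWo t a' hψb hp0 hp
      refine ⟨V ∩ {x | ψ x < c}, inter_mem hV (hLo.mem_nhds hψa), ?_⟩
      filter_upwards [H.hU h] with n hn x hx
      rw [indicator_of_mem (show x ∈ Wᶜ from hdisj x hx.2)]
      exact hn x hx.1) hd0.le ht5
  have B := ldUB H.hU H.hP H.hT
    (fun n => W.indicator fun x => K n x {X : C(ℝ≥0, S) | X t ∈ Wᶜ})
    (fun x => if c ≤ ψ x then ⨆ y ∈ Wᶜ, transDen Px x t y else 0)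
    (fun x => by
      split_ifs
      · exact bsup_nonneg fun _ _ => H.hyp.T_nonneg _ _ _
      · exact le_rfl) one_pos
    (Eventually.of_forall fun n x => by
      have := H.hK n
      refine (indicator_le_self _ _ x).trans ?_
      simpa using prob_le_one)
    (fun x η hη => by
      by_cases hx : c ≤ ψ x
      · obtain ⟨V, hV, h⟩ := kerU H.hyp H.hK H.hKLD hWo.isClosed_compl t x hη
        refine ⟨V, hV, ?_⟩
        filter_upwards [H.hU h] with n hn x' hx'
        rw [if_pos hx]
        exact (indicator_le_self _ _ x').trans (hn x' hx')
      · refine ⟨_, hLo.mem_nhds (not_le.1 hx), Eventually.of_forall fun n x' hx' => ?_⟩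
        rw [indicator_of_notMem (hdisj x' hx')]
        exact zero_le)
    (c := φ') hφ'0.le
    (fun x => by
      split_ifs with hx
      · rw [mul_comm]
        refine bsup_mul_le (H.icc x).1 hφ'0.le fun y hy => ?_
        rw [mul_comm]
        exact claim t ht6 x y hx (not_lt.1 hy)
      · rw [mul_zero]; exact hφ'0.le)
    (by linarith : 0 < (d - φ') / 2)
  obtain ⟨n, hL, hB, hn⟩ := (L.and (B.and (H.hU (eventually_ne_atTop 0)))).exists
  rw [lintegral_indicator hWm.compl, H.flux_eq n t hWm] at hL
  rw [lintegral_indicator hWm] at hB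
  exact pow_contra (by linarith) (by linarith : φ' + (d - φ') / 2 < d) hn (hL.trans hB)

lemma Ctx.bal (H : Ctx Px A PL K P U) : Bal PL A (rhoU U P) := fun A' A'' _ _ _ hun =>
  le_antisymm (H.bal_half hun) (H.bal_half (by rw [union_comm]; exact hun))

lemma Ctx.ld (H : Ctx Px A PL K P U) {f : S → ℝ} (hf : Continuous f) (hf0 : ∀ x, 0 ≤ f x)
    (hfb : BddAbove (range f)) :
    Tendsto (fun n : ℕ => (∫ x, (f x) ^ n ∂(P n)) ^ ((n : ℝ)⁻¹)) U
      (𝓝 (⨆ x, f x * rhoU U P x)) := by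
  obtain ⟨M0, hM0⟩ := hfb
  set M := max M0 1 with hMdef
  have hM : 0 < M := lt_max_of_lt_right one_pos
  have hfM : ∀ x, f x ≤ M := fun x => (hM0 ⟨x, rfl⟩).trans (le_max_left _ _)
  have hbd : BddAbove (range fun x => f x * rhoU U P x) := by
    refine ⟨M, ?_⟩
    rintro _ ⟨x, rfl⟩
    exact (mul_le_of_le_one_right (hf0 x) (H.icc x).2).trans (hfM x)
  set m := ⨆ x, f x * rhoU U P x with hm
  have hm0 : 0 ≤ m := Real.iSup_nonneg fun x => mul_nonneg (hf0 x) (H.icc x).1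
  have hI0 : ∀ n : ℕ, 0 ≤ ∫ x, (f x) ^ n ∂(P n) := fun n =>
    integral_nonneg fun x => pow_nonneg (hf0 x) n
  have hne : Nonempty S := by
    by_contra hE
    rw [not_nonempty_iff] at hE
    have := H.hP 0
    have h1 : P 0 univ = 1 := measure_univ
    rw [univ_eq_empty_iff.2 hE, measure_empty] at h1
    exact zero_ne_one h1
  rw [tendsto_order]
  constructor
  · intro c hc
    rcases lt_or_ge c 0 with hc0 | hc0
    · exact Eventually.of_forall fun n => hc0.trans_le (Real.rpow_nonneg (hI0 n) _)
    obtain ⟨d, hd1, hd2⟩ := exists_between hc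
    obtain ⟨x, hx⟩ := exists_lt_of_lt_ciSup hd2
    rw [mul_comm] at hx
    have L := ldLB (U := U) (P := P) (fun n x => ENNReal.ofReal (f x ^ n)) x (hf0 x)
      (fun b hb0 hb => ⟨{x' | b < f x'}, (isOpen_lt continuous_const hf).mem_nhds hb,
        Eventually.of_forall fun n x' hx' => ENNReal.ofReal_le_ofReal
          (pow_le_pow_left₀ hb0 (le_of_lt hx') n)⟩) (hc0.trans hd1.le) hx
    filter_upwards [L, H.hU (eventually_ne_atTop 0)] with n hn hn0
    have := H.hP n
    rw [← ofReal_int (P n) hf hf0 hfM n, ENNReal.ofReal_le_ofReal_iff (hI0 n)] at hn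
    refine hd1.trans_le (le_of_not_gt fun hlt => ?_)
    have := pow_lt_pow_left₀ hlt (Real.rpow_nonneg (hI0 n) _) hn0
    rw [root_pow (hI0 n) hn0] at this
    linarith
  · intro c hc
    have B := ldUB H.hU H.hP H.hT (fun n x => ENNReal.ofReal (f x ^ n)) f hf0 hM
      (Eventually.of_forall fun n x => ENNReal.ofReal_le_ofReal
          (pow_le_pow_left₀ (hf0 x) (hfM x) n))
      (fun x ε hε => ⟨{x' | f x' < f x + ε},
        (isOpen_lt hf continuous_const).mem_nhds (show f x < f x + ε by linarith),
        Eventually.of_forall fun n x' hx' => ENNReal.ofReal_le_ofReal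
          (pow_le_pow_left₀ (hf0 x') (le_of_lt hx') n)⟩)
      hm0 (fun x => by rw [mul_comm]; exact le_ciSup hbd x) (by linarith : 0 < (c - m) / 2)
    filter_upwards [B, H.hU (eventually_ne_atTop 0)] with n hn hn0
    have := H.hP n
    rw [← ofReal_int (P n) hf hf0 hfM n, ENNReal.ofReal_le_ofReal_iff
      (pow_nonneg (by linarith) n)] at hn
    refine lt_of_le_of_lt (le_of_not_gt fun hlt => ?_) (by linarith : m + (c - m) / 2 < c)
    have := pow_lt_pow_left₀ hlt (by linarith) hn0
    rw [root_pow (hI0 n) hn0] at this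
    linarith

end final

theorem stmt17 [MeasurableSpace S] [BorelSpace S]
    [MeasurableSpace C(ℝ≥0, S)] [BorelSpace C(ℝ≥0, S)]
    (Px : S → C(ℝ≥0, S) → ℝ) (A : Set S) (hyp : DevSetup S Px A)
    (PL : S → S → ℝ)
    (hPL : ∀ x y : S, Tendsto (fun t : ℝ≥0 => transDen Px x t y) atTop (𝓝 (PL x y)))
    (K : ℕ → ProbabilityTheory.Kernel S C(ℝ≥0, S))
    (hK : ∀ n, ProbabilityTheory.IsMarkovKernel (K n))
    (hK0 : ∀ n (x : S), K n x {X : C(ℝ≥0, S) | X 0 = x} = 1)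
    (hKLD : ∀ (x : S) (xs : ℕ → S), Tendsto xs atTop (𝓝 x) →
      LDConv (fun n => K n (xs n)) (fun n => n) (Px x))
    (P : ℕ → Measure S) (hP : ∀ n, IsProbabilityMeasure (P n))
    (hinv : ∀ n (t : ℝ≥0) (Γ : Set S), MeasurableSet Γ →
      (∫⁻ x, K n x {X : C(ℝ≥0, S) | X t ∈ Γ} ∂(P n)) = P n Γ)
    (htight : ∀ ε : ℝ, 0 < ε → ∃ Kc : Set S, IsCompact Kc ∧
      Filter.limsup (fun n => ((P n) Kcᶜ).toReal ^ ((n : ℝ)⁻¹)) atTop < ε) :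
    ∃ ρ : S → ℝ, IsDeviabilityDensity ρ ∧
      (∀ A' A'' : Set S, A'.Nonempty → A''.Nonempty → Disjoint A' A'' → A' ∪ A'' = A →
        maxFlux PL ρ A' A'' = maxFlux PL ρ A'' A') ∧
      (⨆ a ∈ A, ρ a) = 1 ∧
      (∀ ρ' : S → ℝ, IsDeviabilityDensity ρ' →
        (∀ A' A'' : Set S, A'.Nonempty → A''.Nonempty → Disjoint A' A'' → A' ∪ A'' = A →
          maxFlux PL ρ' A' A'' = maxFlux PL ρ' A'' A') →
        (⨆ a ∈ A, ρ' a) = 1 → ∀ a ∈ A, ρ' a = ρ a) ∧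
      (∀ x : S, ρ x = ⨆ a ∈ A, ρ a * PL a x) ∧
      LDConv P (fun n => n) ρ := by
  have ctx : ∀ U : Ultrafilter ℕ, (U : Filter ℕ) ≤ atTop → Ctx Px A PL K P U := by
    intro U hU
    refine ⟨hyp, hPL, hK, hKLD, hP, hinv, hU, fun η hη => ?_⟩
    obtain ⟨Kc, hKc, hlim⟩ := htight η hη
    refine ⟨Kc, hKc, ?_⟩
    have hev := eventually_lt_of_limsup_lt hlim (by
      refine isBoundedUnder_of ⟨1, fun n => ?_⟩
      have := hP n
      exact Real.rpow_le_one ENNReal.toReal_nonneg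
        (by simpa using ENNReal.toReal_mono ENNReal.one_ne_top (prob_le_one (μ := P n)))
        (by positivity))
    filter_upwards [hU hev, hU (eventually_ne_atTop 0)] with n hn hn0
    have := hP n
    rw [← ENNReal.ofReal_toReal (measure_ne_top (P n) Kcᶜ)]
    refine ENNReal.ofReal_le_ofReal ?_
    rw [← root_pow (I := ((P n) Kcᶜ).toReal) ENNReal.toReal_nonneg hn0]
    exact pow_le_pow_left₀ (Real.rpow_nonneg ENNReal.toReal_nonneg _) hn.le n
  have h0 := hyp.PL_nonneg hPL
  have h1 := hyp.PL_le_one hPL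
  have hpos : ∀ a ∈ A, ∀ b ∈ A, 0 < PL a b := fun a ha b hb => hyp.PL_pos hPL ha hb
  have uniq : ∀ ρ ρ' : S → ℝ, IsDeviabilityDensity ρ → IsDeviabilityDensity ρ' →
      Bal PL A ρ → Bal PL A ρ' → (⨆ a ∈ A, ρ a) = 1 → (⨆ a ∈ A, ρ' a) = 1 →
      ∀ a ∈ A, ρ a = ρ' a := fun ρ ρ' d d' b b' n n' a ha =>
    le_antisymm (bal_le h0 h1 hpos hyp.locFin d d' b b' n' a ha)
      (bal_le h0 h1 hpos hyp.locFin d' d b' b n a ha)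
  have H := ctx (hyperfilter ℕ) Nat.hyperfilter_le_atTop
  refine ⟨rhoU (hyperfilter ℕ) P, H.dev, H.bal, H.norm, fun ρ' d b n =>
    uniq _ _ d H.dev b H.bal n H.norm, H.repr, fun f hf hf0 hfb => ?_⟩
  rw [tendsto_iff_ultrafilter]
  intro U hU
  have HU := ctx U hU
  have heqA := uniq _ _ HU.dev H.dev HU.bal H.bal HU.norm H.norm
  have heq : rhoU U P = rhoU (hyperfilter ℕ) P := by
    funext x
    rw [HU.repr x, H.repr x]
    exact iSup_congr fun a => iSup_congr fun ha => by rw [heqA a ha]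
  rw [← heq]
  exact HU.ld hf hf0 hfb
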